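/- arXiv:2011.03146 — 2 statements merged into one kernel-verified Lean document; each statement's English description precedes it below -/
import Mathlib

section
/- Let m∈ℕ, m≥2. There exists a constant C>0 depending only on m such that for all f,g,k ∈ C₀^∞(ℝ³;ℝ³), | ∫_{ℝ³} ( ∇^m((f·∇)g) − (f·∇)(∇^m g) ) · ∇^m k dx | ≤ C ( ‖∇^m f‖_{L²}² + ‖∇^m g‖_{L²}² + ‖∇^m k‖_{L²}² ) ( ‖∇f‖_{L^∞} + ‖∇g‖_{L^∞} ). -/
open MeasureTheory Set ENNReal RealInnerProductSpace

noncomputable section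

abbrev E3 : Type := EuclideanSpace ℝ (Fin 3)

/-- The convection term `(f·∇)g`, i.e. the derivative of `g` in direction `f(x)`. -/
def conv (f g : E3 → E3) (x : E3) : E3 := fderiv ℝ g x (f x)

/-- The commutator `[∇^m, f·∇]g = ∇^m((f·∇)g) − (f·∇)(∇^m g)`. -/
def commGrad (m : ℕ) (f g : E3 → E3) (x : E3) :
    ContinuousMultilinearMap ℝ (fun _ : Fin m => E3) E3 :=
  iteratedFDeriv ℝ m (conv f g) x - fderiv ℝ (iteratedFDeriv ℝ m g) x (f x)

/-- The full contraction `A · B` of two `E3`-valued `m`-multilinear tensors on `ℝ³`,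
obtained by summing the inner products of their entries over all multi-indices. -/
def contract (m : ℕ) (A B : ContinuousMultilinearMap ℝ (fun _ : Fin m => E3) E3) : ℝ :=
  ∑ ι : Fin m → Fin 3,
    ⟪A (fun l => EuclideanSpace.single (ι l) 1), B (fun l => EuclideanSpace.single (ι l) 1)⟫

/-!
Integrating `|∂ₑh|^q ∂ₑh · ∂ₑh` by parts and applying Hölder's inequality gives
`‖∇h‖_p² ≤ C ‖∇²h‖_r ‖h‖_s` whenever `1/r + 1/s = 2/p` and `p > 2`. Hence, up to constants,
`i ↦ ‖∇^i u‖_{2n/i}` is log-convex, which is the Gagliardo–Nirenberg inequality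
`‖∇^i u‖_{2n/i}^n ≤ C ‖u‖_∞^{n-i} ‖∇^n u‖₂^i`.

Since `∇^m` commutes with differentiation in the fixed direction `f(x)`, the commutator at `x` is
`∇^m((f - f(x))·∇g)`, and its Leibniz expansion at `x` loses the term with `m + 1` derivatives on
`g`. The remaining terms are products `∇^i(∇g) · ∇^j(∇f)` with `i + j = m - 1`; Hölder's inequality
with exponents `2(m-1)/i` and `2(m-1)/j`, interpolation for `u = ∇f, ∇g`, and Cauchy–Schwarz
against `∇^m k` give the estimate.
-/

section Holder

variable {α E F G : Type*} {mα : MeasurableSpace α} {μ : Measure α}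
  [NormedAddCommGroup E] [NormedAddCommGroup F] [NormedAddCommGroup G]
  {f : α → E} {g : α → F} {h : α → G} {p q r : ℝ≥0∞}

lemma lpNorm_norm_mul_norm_le [HolderTriple p q r] (hf : MemLp f p μ) (hg : MemLp g q μ) :
    lpNorm (fun x => ‖f x‖ * ‖g x‖) r μ ≤ lpNorm f p μ * lpNorm g q μ := by
  rw [← lpNorm_norm hf.1, ← lpNorm_norm hg.1, ← toReal_eLpNorm hf.1.norm,
    ← toReal_eLpNorm hg.1.norm, ← toReal_eLpNorm (hf.1.norm.fun_mul hg.1.norm),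
    ← ENNReal.toReal_mul]
  exact ENNReal.toReal_mono (ENNReal.mul_ne_top hf.norm.2.ne hg.norm.2.ne)
    (eLpNorm_smul_le_mul_eLpNorm (φ := fun x => ‖f x‖) hg.1.norm hf.1.norm)

lemma lpNorm_congr_norm (hf : MemLp f p μ) (hg : MemLp g p μ) (hfg : ∀ x, ‖f x‖ = ‖g x‖) :
    lpNorm f p μ = lpNorm g p μ := by
  rw [← lpNorm_norm hf.1, ← lpNorm_norm hg.1]
  simp only [hfg]

lemma lpNorm_le_mul_lpNorm {C : ℝ} (hC : 0 ≤ C) (hg : MemLp g p μ)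
    (hfg : ∀ x, ‖f x‖ ≤ C * ‖g x‖) : lpNorm f p μ ≤ C * lpNorm g p μ := by
  calc lpNorm f p μ ≤ lpNorm (C • fun x => ‖g x‖) p μ :=
        lpNorm_mono_real (hg.norm.const_smul C) hfg
    _ = C * lpNorm g p μ := by
        rw [lpNorm_const_smul, lpNorm_norm hg.1, coe_nnnorm, Real.norm_of_nonneg hC]

lemma integral_norm_mul_norm_le [HolderTriple p q 1] (hf : MemLp f p μ) (hg : MemLp g q μ) :
    ∫ x, ‖f x‖ * ‖g x‖ ∂μ ≤ lpNorm f p μ * lpNorm g q μ := by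
  simpa only [lpNorm_one_eq_integral_norm (hf.1.norm.fun_mul hg.1.norm), norm_mul, norm_norm]
    using lpNorm_norm_mul_norm_le (r := 1) hf hg

lemma integral_norm_mul_norm_mul_norm_le (hpqr : p⁻¹ + q⁻¹ + r⁻¹ = 1)
    (hf : MemLp f p μ) (hg : MemLp g q μ) (hh : MemLp h r μ) :
    ∫ x, ‖f x‖ * ‖g x‖ * ‖h x‖ ∂μ ≤ lpNorm f p μ * lpNorm g q μ * lpNorm h r μ := by
  have : HolderTriple p q (p⁻¹ + q⁻¹)⁻¹ := ENNReal.holderTriple_iff .. |>.2 (inv_inv _).symm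
  have : HolderTriple (p⁻¹ + q⁻¹)⁻¹ r 1 :=
    ENNReal.holderTriple_iff .. |>.2 (by rw [inv_inv, hpqr, inv_one])
  calc ∫ x, ‖f x‖ * ‖g x‖ * ‖h x‖ ∂μ = ∫ x, ‖‖f x‖ * ‖g x‖‖ * ‖h x‖ ∂μ := by
        simp only [norm_mul, norm_norm]
    _ ≤ lpNorm (fun x => ‖f x‖ * ‖g x‖) (p⁻¹ + q⁻¹)⁻¹ μ * lpNorm h r μ :=
        integral_norm_mul_norm_le (hg.norm.smul hf.norm) hh
    _ ≤ lpNorm f p μ * lpNorm g q μ * lpNorm h r μ := by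
        gcongr
        exacts [lpNorm_nonneg, lpNorm_norm_mul_norm_le hf hg]

lemma lpNorm_rpow_toReal (hp₀ : p ≠ 0) (hp : p ≠ ∞) (hf : AEStronglyMeasurable f μ) :
    lpNorm f p μ ^ p.toReal = ∫ x, ‖f x‖ ^ p.toReal ∂μ := by
  rw [lpNorm_eq_integral_norm_rpow_toReal hp₀ hp hf,
    Real.rpow_inv_rpow (by positivity) (ENNReal.toReal_pos hp₀ hp).ne']

lemma lpNorm_norm_rpow (hf : AEStronglyMeasurable f μ) {q : ℝ} (hq : 0 < q) :
    lpNorm (fun x => ‖f x‖ ^ q) (p / ENNReal.ofReal q) μ = lpNorm f p μ ^ q := by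
  have hq' : ENNReal.ofReal q ≠ 0 := (ENNReal.ofReal_pos.2 hq).ne'
  rw [← toReal_eLpNorm (hf.norm.aemeasurable.pow_const q).aestronglyMeasurable,
    eLpNorm_norm_rpow _ hq, ENNReal.div_mul_cancel hq' ENNReal.ofReal_ne_top,
    ← ENNReal.toReal_rpow, toReal_eLpNorm hf]

lemma integral_norm_rpow_mul_norm_mul_norm_le {t : ℝ} (ht : 0 < t)
    (hpqr : ENNReal.ofReal t / p + q⁻¹ + r⁻¹ = 1)
    (hf : MemLp f p μ) (hg : MemLp g q μ) (hh : MemLp h r μ) :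
    ∫ x, ‖f x‖ ^ t * ‖g x‖ * ‖h x‖ ∂μ ≤ lpNorm f p μ ^ t * lpNorm g q μ * lpNorm h r μ := by
  have hpow := hf.norm_rpow_div (ENNReal.ofReal t)
  rw [ENNReal.toReal_ofReal ht.le] at hpow
  have := integral_norm_mul_norm_mul_norm_le (p := p / ENNReal.ofReal t)
    (by rwa [ENNReal.inv_div (Or.inl ENNReal.ofReal_ne_top)
      (Or.inl (ENNReal.ofReal_pos.2 ht).ne')]) hpow hg hh
  simpa only [lpNorm_norm_rpow hf.1 ht, Real.norm_of_nonneg (Real.rpow_nonneg (norm_nonneg _) t)]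
    using this

end Holder

section GagliardoNirenbergStep

lemma hasDerivAt_abs_rpow_mul_self {q : ℝ} (hq : 0 ≤ q) (t : ℝ) :
    HasDerivAt (fun s : ℝ => |s| ^ q * s) ((q + 1) * |t| ^ q) t := by
  have hderiv : ∀ s ≠ (0 : ℝ), HasDerivAt (fun s : ℝ => |s| ^ q * s) ((q + 1) * |s| ^ q) s := by
    intro s hs
    have habs : |s| ^ q = |s| ^ (q - 1) * |s| := by
      rw [← Real.rpow_add_one (abs_ne_zero.2 hs), sub_add_cancel]
    refine (((hasDerivAt_abs hs).rpow_const (Or.inl (abs_ne_zero.2 hs))).mul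
      (hasDerivAt_id s)).congr_deriv ?_
    rw [id, habs, ← sign_mul_self s]
    ring
  have hcont : Continuous fun s : ℝ => |s| ^ q := continuous_abs.rpow_const fun _ => Or.inr hq
  exact hasDerivAt_of_hasDerivAt_of_ne' hderiv (hcont.mul continuous_id).continuousAt
    (continuous_const.mul hcont).continuousAt t

lemma toReal_sub_one_nonneg {p : ℝ≥0∞} (hp : 2 < p) (hp_top : p ≠ ∞) : 0 ≤ p.toReal - 1 := by
  rw [sub_nonneg, ← ENNReal.toReal_one]
  exact ENNReal.toReal_mono hp_top (ENNReal.one_lt_two.trans hp).le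

lemma exists_opNorm_le_sum_abs_apply (E F : Type*) [NormedAddCommGroup E] [NormedSpace ℝ E]
    [FiniteDimensional ℝ E] [NormedAddCommGroup F] [NormedSpace ℝ F] [FiniteDimensional ℝ F] :
    ∃ (ι : Type) (_ : Fintype ι) (e : ι → E) (ℓ : ι → F →L[ℝ] ℝ) (C : ℝ), 0 ≤ C ∧
      ∀ T : E →L[ℝ] F, ‖T‖ ≤ C * ∑ i, |ℓ i (T (e i))| := by
  let b := Module.finBasis ℝ E
  let c := Module.finBasis ℝ F
  obtain ⟨K, hK, hb⟩ := b.exists_opNorm_le (F := F)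
  refine ⟨Fin (Module.finrank ℝ E) × Fin (Module.finrank ℝ F), inferInstance, fun i => b i.1,
    fun i => LinearMap.toContinuousLinearMap (c.coord i.2), K * ∑ j, ‖c j‖, by positivity,
    fun T => ?_⟩
  simp only [LinearMap.coe_toContinuousLinearMap', Module.Basis.coord_apply]
  rw [mul_assoc, Finset.sum_mul]
  refine hb (by positivity) fun a => ?_
  calc ‖T (b a)‖ = ‖∑ j, c.repr (T (b a)) j • c j‖ := by rw [c.sum_repr]
    _ ≤ ∑ j, ‖c j‖ * |c.repr (T (b a)) j| :=
        norm_sum_le_of_le _ fun j _ => by rw [norm_smul, mul_comm, Real.norm_eq_abs]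
    _ ≤ ∑ j, ‖c j‖ * ∑ i : Fin (Module.finrank ℝ E) × Fin (Module.finrank ℝ F),
          |c.repr (T (b i.1)) i.2| := by
        gcongr with j
        exact Finset.single_le_sum (fun i _ => abs_nonneg (c.repr (T (b i.1)) i.2))
          (Finset.mem_univ (a, j))

variable {E : Type*} [NormedAddCommGroup E] [NormedSpace ℝ E] [FiniteDimensional ℝ E]
  [MeasurableSpace E] [BorelSpace E] {μ : Measure E} [μ.IsAddHaarMeasure]

section Scalar

variable {φ : E → ℝ}

lemma integral_abs_fderiv_apply_rpow_eq (hφ : ContDiff ℝ 2 φ) (hs : HasCompactSupport φ) (e : E)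
    {q : ℝ} (hq : 0 ≤ q) :
    ∫ x, |fderiv ℝ φ x e| ^ (q + 2) ∂μ =
      -((q + 1) * ∫ x, |fderiv ℝ φ x e| ^ q *
        (fderiv ℝ (fun y => fderiv ℝ φ y e) x e * φ x) ∂μ) := by
  set w : E → ℝ := fun x => fderiv ℝ φ x e
  have hw1 : ContDiff ℝ 1 w := (hφ.fderiv_right (by norm_num)).clm_apply contDiff_const
  have hwc : Continuous w := hw1.continuous
  have hw'c : Continuous fun x => fderiv ℝ w x e :=
    (hw1.continuous_fderiv one_ne_zero).clm_apply continuous_const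
  have hwq : Continuous fun x => |w x| ^ q := hwc.abs.rpow_const fun _ => Or.inr hq
  have hψ : ∀ x, HasFDerivAt (fun y => |w y| ^ q * w y)
      (((q + 1) * |w x| ^ q) • fderiv ℝ w x) x := fun x =>
    (hasDerivAt_abs_rpow_mul_self hq (w x)).comp_hasFDerivAt x
      (hw1.differentiable one_ne_zero x).hasFDerivAt
  have hψ' : ∀ x, fderiv ℝ (fun y => |w y| ^ q * w y) x e
      = (q + 1) * (|w x| ^ q * fderiv ℝ w x e) := fun x => by
    rw [(hψ x).fderiv, smul_apply, smul_eq_mul, mul_assoc]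
  have hibp : ∫ x, |w x| ^ q * w x * w x ∂μ
      = -∫ x, (q + 1) * (|w x| ^ q * fderiv ℝ w x e) * φ x ∂μ := by
    simp only [← hψ']
    refine integral_mul_fderiv_eq_neg_fderiv_mul_of_integrable ?_
      (((hwq.mul hwc).mul hwc).integrable_of_hasCompactSupport (hs.fderiv_apply ℝ e).mul_left)
      (((hwq.mul hwc).mul hφ.continuous).integrable_of_hasCompactSupport hs.mul_left)
      (fun x _ => (hψ x).differentiableAt) (fun x _ => hφ.differentiable two_ne_zero x)
    simp only [hψ']
    exact ((continuous_const.mul (hwq.mul hw'c)).mul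
      hφ.continuous).integrable_of_hasCompactSupport hs.mul_left
  calc ∫ x, |w x| ^ (q + 2) ∂μ = ∫ x, |w x| ^ q * w x * w x ∂μ := by
        congr with x
        rw [Real.rpow_add_of_nonneg (abs_nonneg _) hq zero_le_two, Real.rpow_two, sq_abs]
        ring
    _ = -((q + 1) * ∫ x, |w x| ^ q * (fderiv ℝ w x e * φ x) ∂μ) := by
        rw [hibp]
        simp only [mul_assoc, integral_const_mul]

lemma lpNorm_fderiv_apply_rpow_le {q : ℝ} (hq : 0 < q) {r s : ℝ≥0∞}
    (hqrs : ENNReal.ofReal q / ENNReal.ofReal (q + 2) + r⁻¹ + s⁻¹ = 1) (hφ : ContDiff ℝ 2 φ)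
    (hs : HasCompactSupport φ) (e : E) :
    lpNorm (fun x => fderiv ℝ φ x e) (ENNReal.ofReal (q + 2)) μ ^ (q + 2) ≤
      (q + 1) * (lpNorm (fun x => fderiv ℝ φ x e) (ENNReal.ofReal (q + 2)) μ ^ q *
        lpNorm (fun x => fderiv ℝ (fun y => fderiv ℝ φ y e) x e) r μ * lpNorm φ s μ) := by
  have hq2 : 0 < q + 2 := by positivity
  set w : E → ℝ := fun x => fderiv ℝ φ x e with hw
  have hw1 : ContDiff ℝ 1 w := (hφ.fderiv_right (by norm_num)).clm_apply contDiff_const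
  have hws : HasCompactSupport w := hs.fderiv_apply ℝ e
  have hw'c : Continuous fun x => fderiv ℝ w x e :=
    (hw1.continuous_fderiv one_ne_zero).clm_apply continuous_const
  calc lpNorm w (ENNReal.ofReal (q + 2)) μ ^ (q + 2) = ∫ x, |w x| ^ (q + 2) ∂μ := by
        simpa only [ENNReal.toReal_ofReal hq2.le, Real.norm_eq_abs] using lpNorm_rpow_toReal
          (ENNReal.ofReal_pos.2 hq2).ne' ENNReal.ofReal_ne_top hw1.continuous.aestronglyMeasurable
    _ ≤ (q + 1) * ∫ x, ‖w x‖ ^ q * ‖fderiv ℝ w x e‖ * ‖φ x‖ ∂μ := by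
        rw [integral_abs_fderiv_apply_rpow_eq hφ hs e hq.le, ← mul_neg]
        gcongr
        refine (neg_le_abs _).trans (abs_integral_le_integral_abs.trans_eq ?_)
        simp only [hw, abs_mul, Real.norm_eq_abs, mul_assoc, Real.abs_rpow_of_nonneg, abs_nonneg,
          abs_abs]
    _ ≤ _ := by
        gcongr
        exact integral_norm_rpow_mul_norm_mul_norm_le hq hqrs
          (hw1.continuous.memLp_of_hasCompactSupport hws)
          (hw'c.memLp_of_hasCompactSupport (hws.fderiv_apply ℝ e))
          (hφ.continuous.memLp_of_hasCompactSupport hs)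

lemma sq_lpNorm_fderiv_apply_le {p r s : ℝ≥0∞} (hp : 2 < p) (hp_top : p ≠ ∞)
    (hprs : r⁻¹ + s⁻¹ = 2 / p) (hφ : ContDiff ℝ 2 φ) (hs : HasCompactSupport φ) (e : E) :
    lpNorm (fun x => fderiv ℝ φ x e) p μ ^ 2 ≤
      (p.toReal - 1) * (lpNorm (fun x => fderiv ℝ (fun y => fderiv ℝ φ y e) x e) r μ *
        lpNorm φ s μ) := by
  obtain ⟨q, hq, rfl⟩ : ∃ q : ℝ, 0 < q ∧ p = ENNReal.ofReal (q + 2) := by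
    lift p to NNReal using hp_top
    have hp' : (2 : ℝ) < p := by exact_mod_cast hp
    exact ⟨p - 2, by linarith, by simp⟩
  have hqrs : ENNReal.ofReal q / ENNReal.ofReal (q + 2) + r⁻¹ + s⁻¹ = 1 := by
    rw [add_assoc, hprs, ENNReal.div_add_div_same, ← ENNReal.ofReal_ofNat 2,
      ← ENNReal.ofReal_add hq.le zero_le_two]
    exact ENNReal.div_self (zero_lt_two.trans hp).ne' hp_top
  have key := lpNorm_fderiv_apply_rpow_le (μ := μ) hq hqrs hφ hs e
  rw [ENNReal.toReal_ofReal (by positivity), show q + 2 - 1 = q + 1 by ring]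
  set N := lpNorm (fun x => fderiv ℝ φ x e) (ENNReal.ofReal (q + 2)) μ
  have hN0 : 0 ≤ N := lpNorm_nonneg
  obtain hN | hN := hN0.eq_or_lt
  · rw [← hN, zero_pow two_ne_zero]
    exact mul_nonneg (by positivity) (mul_nonneg lpNorm_nonneg lpNorm_nonneg)
  · rw [Real.rpow_add hN, Real.rpow_two] at key
    exact le_of_mul_le_mul_left (key.trans_eq (by ring)) (Real.rpow_pos_of_pos hN q)

end Scalar

variable {F : Type*} [NormedAddCommGroup F] [NormedSpace ℝ F]

lemma sq_lpNorm_apply_fderiv_apply_le {p r s : ℝ≥0∞} (hp : 2 < p) (hp_top : p ≠ ∞)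
    (hprs : r⁻¹ + s⁻¹ = 2 / p) {h : E → F} (hh : ContDiff ℝ 2 h) (hs : HasCompactSupport h)
    (e : E) (ℓ : F →L[ℝ] ℝ) :
    lpNorm (fun x => ℓ (fderiv ℝ h x e)) p μ ^ 2 ≤
      (p.toReal - 1) * (‖ℓ‖ * ‖e‖) ^ 2 *
        (lpNorm (fderiv ℝ (fderiv ℝ h)) r μ * lpNorm h s μ) := by
  have hh1 : ContDiff ℝ 1 (fderiv ℝ h) := hh.fderiv_right (by norm_num)
  have hd1 (x : E) : fderiv ℝ (fun y => ℓ (h y)) x e = ℓ (fderiv ℝ h x e) :=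
    DFunLike.congr_fun
      (ℓ.hasFDerivAt.comp x (hh.differentiable two_ne_zero x).hasFDerivAt).fderiv e
  have hd2 (x : E) : fderiv ℝ (fun y => ℓ (fderiv ℝ h y e)) x e
      = ℓ (fderiv ℝ (fderiv ℝ h) x e e) :=
    DFunLike.congr_fun (ℓ.hasFDerivAt.comp x ((ContinuousLinearMap.apply ℝ F e).hasFDerivAt.comp x
      (hh1.differentiable one_ne_zero x).hasFDerivAt)).fderiv e
  have hp1 := toReal_sub_one_nonneg hp hp_top
  have hmem : MemLp h s μ := hh.continuous.memLp_of_hasCompactSupport hs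
  have hmem2 : MemLp (fderiv ℝ (fderiv ℝ h)) r μ :=
    (hh1.continuous_fderiv one_ne_zero).memLp_of_hasCompactSupport ((hs.fderiv ℝ).fderiv ℝ)
  have hℓ0 : lpNorm (fun x => ℓ (h x)) s μ ≤ ‖ℓ‖ * lpNorm h s μ :=
    lpNorm_le_mul_lpNorm (by positivity) hmem fun x => ℓ.le_opNorm (h x)
  have hℓ2 : lpNorm (fun x => ℓ (fderiv ℝ (fderiv ℝ h) x e e)) r μ
      ≤ ‖ℓ‖ * ‖e‖ ^ 2 * lpNorm (fderiv ℝ (fderiv ℝ h)) r μ := by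
    refine lpNorm_le_mul_lpNorm (by positivity) hmem2 fun x => ?_
    calc ‖ℓ (fderiv ℝ (fderiv ℝ h) x e e)‖
        ≤ ‖ℓ‖ * (‖fderiv ℝ (fderiv ℝ h) x‖ * ‖e‖ * ‖e‖) :=
          ℓ.le_opNorm_of_le (ContinuousLinearMap.le_opNorm₂ _ _ _)
      _ = _ := by ring
  calc lpNorm (fun x => ℓ (fderiv ℝ h x e)) p μ ^ 2
      ≤ (p.toReal - 1) * (lpNorm (fun x => ℓ (fderiv ℝ (fderiv ℝ h) x e e)) r μ *
          lpNorm (fun x => ℓ (h x)) s μ) := by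
        simpa only [hd1, hd2] using sq_lpNorm_fderiv_apply_le (μ := μ)
          (φ := fun x => ℓ (h x)) hp hp_top hprs (ℓ.contDiff.comp hh) (hs.comp_left (map_zero ℓ)) e
    _ ≤ (p.toReal - 1) * ((‖ℓ‖ * ‖e‖ ^ 2 * lpNorm (fderiv ℝ (fderiv ℝ h)) r μ) *
          (‖ℓ‖ * lpNorm h s μ)) := by
        gcongr
        exacts [lpNorm_nonneg, mul_nonneg (by positivity) lpNorm_nonneg]
    _ = _ := by ring

lemma exists_sq_lpNorm_fderiv_le [FiniteDimensional ℝ F] {p : ℝ≥0∞} (hp : 2 < p)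
    (hp_top : p ≠ ∞) :
    ∃ C : ℝ, 0 ≤ C ∧ ∀ (r s : ℝ≥0∞), r⁻¹ + s⁻¹ = 2 / p → ∀ h : E → F,
      ContDiff ℝ 2 h → HasCompactSupport h →
        lpNorm (fderiv ℝ h) p μ ^ 2 ≤
          C * (lpNorm (fderiv ℝ (fderiv ℝ h)) r μ * lpNorm h s μ) := by
  obtain ⟨ι, _, e, ℓ, C, hC, hnorm⟩ := exists_opNorm_le_sum_abs_apply E F
  have hp1 := toReal_sub_one_nonneg hp hp_top
  refine ⟨C ^ 2 * (Fintype.card ι * ∑ i, (p.toReal - 1) * (‖ℓ i‖ * ‖e i‖) ^ 2),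
    by positivity, fun r s hrs h hh hs => ?_⟩
  have hmem (i : ι) : MemLp (fun x => ℓ i (fderiv ℝ h x (e i))) p μ :=
    ((ℓ i).continuous.comp ((hh.continuous_fderiv two_ne_zero).clm_apply
      continuous_const)).memLp_of_hasCompactSupport
      ((hs.fderiv_apply ℝ (e i)).comp_left (map_zero (ℓ i)))
  have hsum : lpNorm (fderiv ℝ h) p μ ≤
      C * ∑ i, lpNorm (fun x => ℓ i (fderiv ℝ h x (e i))) p μ :=
    calc lpNorm (fderiv ℝ h) p μ
        ≤ C * lpNorm (∑ i, fun x => |ℓ i (fderiv ℝ h x (e i))|) p μ := by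
          refine lpNorm_le_mul_lpNorm hC (memLp_finsetSum' _ fun i _ => (hmem i).abs) fun x => ?_
          simp only [Finset.sum_apply]
          exact (hnorm _).trans (by gcongr; exact le_abs_self _)
      _ ≤ C * ∑ i, lpNorm (fun x => |ℓ i (fderiv ℝ h x (e i))|) p μ := by
          gcongr
          exact lpNorm_sum_le (fun i _ => (hmem i).abs) (ENNReal.one_lt_two.trans hp).le
      _ = _ := by simp only [lpNorm_fun_abs (hmem _).1]
  calc lpNorm (fderiv ℝ h) p μ ^ 2
      ≤ (C * ∑ i, lpNorm (fun x => ℓ i (fderiv ℝ h x (e i))) p μ) ^ 2 := by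
        gcongr
        exact lpNorm_nonneg
    _ ≤ C ^ 2 * (Fintype.card ι * ∑ i, lpNorm (fun x => ℓ i (fderiv ℝ h x (e i))) p μ ^ 2) := by
        rw [mul_pow]
        gcongr
        exact sq_sum_le_card_mul_sum_sq
    _ ≤ C ^ 2 * (Fintype.card ι * ∑ i, (p.toReal - 1) * (‖ℓ i‖ * ‖e i‖) ^ 2 *
          (lpNorm (fderiv ℝ (fderiv ℝ h)) r μ * lpNorm h s μ)) := by
        gcongr with i
        exact sq_lpNorm_apply_fderiv_apply_le hp hp_top hrs hh hs (e i) (ℓ i)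
    _ = _ := by
        rw [← Finset.sum_mul]
        ring

end GagliardoNirenbergStep

section LogConvex

lemma pow_le_mul_pow_of_sq_le_mul {a : ℕ → ℝ} {n : ℕ} (ha : ∀ i, 0 ≤ a i)
    (hconv : ∀ i, i + 2 ≤ n → a (i + 1) ^ 2 ≤ a i * a (i + 2)) {i : ℕ} (hi : i + 1 ≤ n) :
    a i ^ (i + 1) ≤ a 0 * a (i + 1) ^ i := by
  induction i with
  | zero => simp
  | succ i ih =>
    obtain h0 | h0 := (ha (i + 1)).eq_or_lt
    · rw [← h0, zero_pow (by omega)]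
      exact mul_nonneg (ha 0) (pow_nonneg (ha _) _)
    · refine le_of_mul_le_mul_right ?_ (pow_pos h0 i)
      calc a (i + 1) ^ (i + 1 + 1) * a (i + 1) ^ i = (a (i + 1) ^ 2) ^ (i + 1) := by ring
        _ ≤ (a i * a (i + 2)) ^ (i + 1) := by gcongr; exact hconv i hi
        _ = a i ^ (i + 1) * a (i + 2) ^ (i + 1) := mul_pow ..
        _ ≤ a 0 * a (i + 1) ^ i * a (i + 2) ^ (i + 1) := by
          have := ha (i + 2)
          gcongr
          exact ih (by omega)
        _ = a 0 * a (i + 1 + 1) ^ (i + 1) * a (i + 1) ^ i := by ring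

lemma pow_le_pow_mul_pow_of_sq_le_mul {a : ℕ → ℝ} {n : ℕ} (ha : ∀ i, 0 ≤ a i)
    (hconv : ∀ i, i + 2 ≤ n → a (i + 1) ^ 2 ≤ a i * a (i + 2)) {i : ℕ} (hi : i ≤ n) :
    a i ^ n ≤ a 0 ^ (n - i) * a n ^ i := by
  induction n, hi using Nat.le_induction with
  | base => simp
  | succ n hin ih =>
    have h0 := ha 0
    have hn := ha n
    have hn1 := ha (n + 1)
    obtain rfl | hn0 := n.eq_zero_or_pos
    · simp [Nat.le_zero.1 hin]
    refine le_of_pow_le_pow_left₀ hn0.ne' (by positivity) ?_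
    calc (a i ^ (n + 1)) ^ n = (a i ^ n) ^ (n + 1) := pow_right_comm ..
      _ ≤ (a 0 ^ (n - i) * a n ^ i) ^ (n + 1) := by
        have := ha i
        gcongr
        exact ih fun j hj => hconv j (by omega)
      _ = a 0 ^ ((n - i) * (n + 1)) * (a n ^ (n + 1)) ^ i := by
        rw [mul_pow, ← pow_mul, pow_right_comm]
      _ ≤ a 0 ^ ((n - i) * (n + 1)) * (a 0 * a (n + 1) ^ n) ^ i := by
        gcongr
        exact pow_le_mul_pow_of_sq_le_mul ha hconv le_rfl
      _ = (a 0 ^ (n + 1 - i) * a (n + 1) ^ i) ^ n := by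
        obtain ⟨d, rfl⟩ := Nat.exists_eq_add_of_le hin
        rw [Nat.add_sub_cancel_left, show i + d + 1 - i = d + 1 by omega]
        ring

lemma pow_le_const_pow_mul_of_sq_le_const_mul {a : ℕ → ℝ} {n : ℕ} {L : ℝ} (hL : 1 ≤ L)
    (ha : ∀ i, 0 ≤ a i) (hconv : ∀ i, i + 2 ≤ n → a (i + 1) ^ 2 ≤ L * (a i * a (i + 2)))
    {i : ℕ} (hi : i ≤ n) :
    a i ^ n ≤ (L ^ n ^ 2) ^ n * (a 0 ^ (n - i) * a n ^ i) := by
  -- The weight `L ^ i²` has enough convexity to absorb the factor `L`.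
  have hweighted : ∀ j, j + 2 ≤ n → (L ^ (j + 1) ^ 2 * a (j + 1)) ^ 2 ≤
      L ^ j ^ 2 * a j * (L ^ (j + 2) ^ 2 * a (j + 2)) := fun j hj =>
    calc (L ^ (j + 1) ^ 2 * a (j + 1)) ^ 2 = L ^ (2 * (j + 1) ^ 2) * a (j + 1) ^ 2 := by ring
      _ ≤ L ^ (2 * (j + 1) ^ 2) * (L * (a j * a (j + 2))) := by gcongr; exact hconv j hj
      _ = L ^ (2 * (j + 1) ^ 2 + 1) * (a j * a (j + 2)) := by ring
      _ ≤ L ^ (2 * (j + 1) ^ 2 + 2) * (a j * a (j + 2)) := by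
        have := mul_nonneg (ha j) (ha (j + 2))
        gcongr
        omega
      _ = _ := by ring
  have h0 := ha 0
  have hn := ha n
  calc a i ^ n ≤ (L ^ i ^ 2 * a i) ^ n := by
        gcongr
        exacts [ha i, le_mul_of_one_le_left (ha i) (one_le_pow₀ hL)]
    _ ≤ (L ^ 0 ^ 2 * a 0) ^ (n - i) * (L ^ n ^ 2 * a n) ^ i :=
        pow_le_pow_mul_pow_of_sq_le_mul (a := fun j => L ^ j ^ 2 * a j)
          (fun j => mul_nonneg (by positivity) (ha j)) hweighted hi
    _ = (L ^ n ^ 2) ^ i * (a 0 ^ (n - i) * a n ^ i) := by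
        rw [zero_pow two_ne_zero, pow_zero, one_mul]
        ring
    _ ≤ (L ^ n ^ 2) ^ n * (a 0 ^ (n - i) * a n ^ i) := by
        gcongr
        exact one_le_pow₀ hL

end LogConvex

section InterpExponent

/-- The exponent `2n/i` of the Gagliardo–Nirenberg inequality, at which the `i`-th of `n`
derivatives is measured. It is `∞` for `i = 0` and `2` for `i = n` (if `n ≠ 0`). -/
def interpExponent (n i : ℕ) : ℝ≥0∞ := 2 * n / i

variable {n i : ℕ}

lemma interpExponent_zero (hn : n ≠ 0) : interpExponent n 0 = ∞ := by
  rw [interpExponent, Nat.cast_zero, ENNReal.div_zero (by positivity)]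

lemma interpExponent_self (hn : n ≠ 0) : interpExponent n n = 2 :=
  ENNReal.mul_div_cancel_right (by positivity) (by finiteness)

lemma inv_interpExponent (hn : n ≠ 0) : (interpExponent n i)⁻¹ = i / (2 * n) :=
  ENNReal.inv_div (Or.inl (by finiteness)) (Or.inr (by positivity))

lemma two_lt_interpExponent (hi : i < n) : 2 < interpExponent n i := by
  have hn : n ≠ 0 := hi.ne_bot
  rw [← ENNReal.inv_lt_inv, inv_interpExponent hn, ← one_div,
    ← ENNReal.mul_div_mul_right 1 2 (c := (n : ℝ≥0∞)) (by positivity) (by finiteness), one_mul]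
  exact ENNReal.div_lt_div_right (by positivity) (by finiteness) (by exact_mod_cast hi)

lemma interpExponent_ne_top (hi : i ≠ 0) : interpExponent n i ≠ ∞ :=
  ENNReal.div_ne_top (by finiteness) (by exact_mod_cast hi)

lemma inv_interpExponent_add_inv_interpExponent (hn : n ≠ 0) (j : ℕ) :
    (interpExponent n i)⁻¹ + (interpExponent n j)⁻¹ = (i + j) / (2 * n) := by
  rw [inv_interpExponent hn, inv_interpExponent hn, ENNReal.div_add_div_same]

end InterpExponent

section GagliardoNirenberg

variable {E F : Type*} [NormedAddCommGroup E] [NormedSpace ℝ E] [NormedAddCommGroup F]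
  [NormedSpace ℝ F]

instance finiteDimensional_continuousMultilinearMap [FiniteDimensional ℝ E]
    [FiniteDimensional ℝ F] (i : ℕ) : FiniteDimensional ℝ (E [×i]→L[ℝ] F) :=
  Module.Finite.of_injective (ContinuousMultilinearMap.toMultilinearMapLinear (R' := ℝ) (A := ℝ)
    (M₁ := fun _ : Fin i => E) (M₂ := F)) ContinuousMultilinearMap.toMultilinearMap_injective

set_option maxSynthPendingDepth 3 in
lemma norm_fderiv_fderiv_iteratedFDeriv (i : ℕ) (u : E → F) (x : E) :
    ‖fderiv ℝ (fderiv ℝ (iteratedFDeriv ℝ i u)) x‖ = ‖iteratedFDeriv ℝ (i + 2) u x‖ := by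
  symm
  rw [← norm_fderiv_iteratedFDeriv, iteratedFDeriv_succ_eq_comp_left,
    LinearIsometryEquiv.comp_fderiv]
  apply LinearIsometry.norm_toContinuousLinearMap_comp (LinearIsometryEquiv.toLinearIsometry _)

variable [MeasurableSpace E] [BorelSpace E]

lemma memLp_iteratedFDeriv {n : WithTop ℕ∞} {i : ℕ} {u : E → F}
    (hu : ContDiff ℝ n u) (hi : (i : WithTop ℕ∞) ≤ n) (hs : HasCompactSupport u) (p : ℝ≥0∞)
    (μ : Measure E) [IsFiniteMeasureOnCompacts μ] : MemLp (iteratedFDeriv ℝ i u) p μ :=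
  (hu.continuous_iteratedFDeriv hi).memLp_of_hasCompactSupport (hs.iteratedFDeriv i)

variable [FiniteDimensional ℝ E] [FiniteDimensional ℝ F] (F) (μ : Measure E) [μ.IsAddHaarMeasure]

set_option maxSynthPendingDepth 3 in
lemma exists_sq_lpNorm_iteratedFDeriv_succ_le {n i : ℕ} (hi : i + 2 ≤ n) :
    ∃ C : ℝ, 0 ≤ C ∧ ∀ u : E → F, ContDiff ℝ n u → HasCompactSupport u →
      lpNorm (iteratedFDeriv ℝ (i + 1) u) (interpExponent n (i + 1)) μ ^ 2 ≤
        C * (lpNorm (iteratedFDeriv ℝ i u) (interpExponent n i) μ *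
          lpNorm (iteratedFDeriv ℝ (i + 2) u) (interpExponent n (i + 2)) μ) := by
  have hn : n ≠ 0 := by omega
  obtain ⟨C, hC, hstep⟩ := exists_sq_lpNorm_fderiv_le (F := E [×i]→L[ℝ] F) (μ := μ)
    (two_lt_interpExponent (by omega : i + 1 < n)) (interpExponent_ne_top i.succ_ne_zero)
  refine ⟨C, hC, fun u hu hs => ?_⟩
  have hiu : ContDiff ℝ 2 (iteratedFDeriv ℝ i u) :=
    hu.iteratedFDeriv_right (by exact_mod_cast (by omega : 2 + i ≤ n))
  have hs' := hs.iteratedFDeriv (𝕜 := ℝ) i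
  have hexp : (interpExponent n (i + 2))⁻¹ + (interpExponent n i)⁻¹
      = 2 / interpExponent n (i + 1) := by
    rw [inv_interpExponent_add_inv_interpExponent hn, div_eq_mul_inv 2, inv_interpExponent hn,
      ← mul_div_assoc]
    push_cast
    ring_nf
  have hfderiv : lpNorm (fderiv ℝ (iteratedFDeriv ℝ i u)) (interpExponent n (i + 1)) μ
      = lpNorm (iteratedFDeriv ℝ (i + 1) u) (interpExponent n (i + 1)) μ :=
    lpNorm_congr_norm
      ((hiu.continuous_fderiv two_ne_zero).memLp_of_hasCompactSupport (hs'.fderiv ℝ))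
      (memLp_iteratedFDeriv hu (by exact_mod_cast (by omega : i + 1 ≤ n)) hs _ _)
      fun x => norm_fderiv_iteratedFDeriv
  have hfderiv2 : lpNorm (fderiv ℝ (fderiv ℝ (iteratedFDeriv ℝ i u))) (interpExponent n (i + 2)) μ
      = lpNorm (iteratedFDeriv ℝ (i + 2) u) (interpExponent n (i + 2)) μ :=
    lpNorm_congr_norm
      (((hiu.fderiv_right (by norm_num)).continuous_fderiv one_ne_zero).memLp_of_hasCompactSupport
        ((hs'.fderiv ℝ).fderiv ℝ))
      (memLp_iteratedFDeriv hu (by exact_mod_cast hi) hs _ _)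
      (norm_fderiv_fderiv_iteratedFDeriv i u)
  rw [← hfderiv, ← hfderiv2, mul_comm (lpNorm (iteratedFDeriv ℝ i u) _ μ)]
  exact hstep _ _ hexp _ hiu hs'

lemma exists_pow_lpNorm_iteratedFDeriv_le {n : ℕ} (hn : n ≠ 0) :
    ∃ C : ℝ, 0 ≤ C ∧ ∀ u : E → F, ContDiff ℝ n u → HasCompactSupport u → ∀ i ≤ n,
      lpNorm (iteratedFDeriv ℝ i u) (interpExponent n i) μ ^ n ≤
        C ^ n * (lpNorm u ∞ μ ^ (n - i) * lpNorm (iteratedFDeriv ℝ n u) 2 μ ^ i) := by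
  choose! C hC hstep using
    fun i (hi : i + 2 ≤ n) => exists_sq_lpNorm_iteratedFDeriv_succ_le F μ hi
  set L := 1 + ∑ i ∈ Finset.range (n - 1), C i
  have hCnn : ∀ i ∈ Finset.range (n - 1), 0 ≤ C i :=
    fun i hi => hC i (by have := Finset.mem_range.1 hi; omega)
  have hL : 1 ≤ L := le_add_of_nonneg_right (Finset.sum_nonneg hCnn)
  refine ⟨L ^ n ^ 2, by positivity, fun u hu hs i hi => ?_⟩
  let a : ℕ → ℝ := fun j => lpNorm (iteratedFDeriv ℝ j u) (interpExponent n j) μ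
  have hCL : ∀ j, j + 2 ≤ n → C j ≤ L := fun j hj =>
    (Finset.single_le_sum hCnn (Finset.mem_range.2 (by omega))).trans
      (le_add_of_nonneg_left zero_le_one)
  have hconv : ∀ j, j + 2 ≤ n → a (j + 1) ^ 2 ≤ L * (a j * a (j + 2)) := fun j hj =>
    (hstep j hj u hu hs).trans (mul_le_mul_of_nonneg_right (hCL j hj)
      (mul_nonneg lpNorm_nonneg lpNorm_nonneg))
  have ha0 : a 0 = lpNorm u ∞ μ := by
    simp only [a, interpExponent_zero hn]
    exact lpNorm_congr_norm (memLp_iteratedFDeriv hu (Nat.cast_le.2 n.zero_le) hs _ _)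
      (hu.continuous.memLp_of_hasCompactSupport hs) fun x => norm_iteratedFDeriv_zero
  have han : a n = lpNorm (iteratedFDeriv ℝ n u) 2 μ := by
    simp only [a, interpExponent_self hn]
  rw [← ha0, ← han]
  exact pow_le_const_pow_mul_of_sq_le_const_mul hL (fun _ => lpNorm_nonneg) hconv hi

end GagliardoNirenberg

section Commutator

variable {E F : Type*} [NormedAddCommGroup E] [NormedSpace ℝ E] [NormedAddCommGroup F]
  [NormedSpace ℝ F]

/-- The convection operator `(f·∇)g` of a vector field `f` on `E`, acting on maps with values in
an arbitrary space, so that it applies to `g` as well as to the tensor field `∇^m g`. -/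
def convection (f : E → E) (g : E → F) (x : E) : F := fderiv ℝ g x (f x)

/-- The commutator `[∇^m, f·∇]g` of the `m`-th derivative with the convection operator. -/
def convectionCommutator (m : ℕ) (f : E → E) (g : E → F) (x : E) : E [×m]→L[ℝ] F :=
  iteratedFDeriv ℝ m (convection f g) x - convection f (iteratedFDeriv ℝ m g) x

lemma hasCompactSupport_convection (f : E → E) {g : E → F} (hg : HasCompactSupport g) :
    HasCompactSupport (convection f g) :=
  (hg.fderiv ℝ).mono fun x hx h0 => hx (by rw [convection, h0, zero_apply])

set_option maxSynthPendingDepth 3 in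
lemma iteratedFDeriv_fderiv_apply_const {m : ℕ} {g : E → F} (hg : ContDiff ℝ (m + 1) g)
    (v x : E) :
    iteratedFDeriv ℝ m (fun y => fderiv ℝ g y v) x = fderiv ℝ (iteratedFDeriv ℝ m g) x v := by
  induction m generalizing x with
  | zero =>
    rw [iteratedFDeriv_zero_eq_comp, iteratedFDeriv_zero_eq_comp,
      LinearIsometryEquiv.comp_fderiv]
    rfl
  | succ m ih =>
    have hm : ContDiff ℝ 2 (iteratedFDeriv ℝ m g) :=
      hg.iteratedFDeriv_right (by norm_cast; omega)
    have hdiff : DifferentiableAt ℝ (fderiv ℝ (iteratedFDeriv ℝ m g)) x :=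
      (hm.fderiv_right (m := 1) (by norm_num)).differentiable one_ne_zero x
    have hsymm : IsSymmSndFDerivAt ℝ (iteratedFDeriv ℝ m g) x :=
      hm.contDiffAt.isSymmSndFDerivAt (by rw [minSmoothness_of_isRCLikeNormedField])
    have ih' : iteratedFDeriv ℝ m (fun y => fderiv ℝ g y v)
        = fun y => fderiv ℝ (iteratedFDeriv ℝ m g) y v :=
      funext (ih (hg.of_le (by norm_cast; omega)))
    ext w
    calc iteratedFDeriv ℝ (m + 1) (fun y => fderiv ℝ g y v) x w
        = fderiv ℝ (fderiv ℝ (iteratedFDeriv ℝ m g)) x (w 0) v (Fin.tail w) := by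
          rw [iteratedFDeriv_succ_apply_left, ih',
            fderiv_clm_apply hdiff (differentiableAt_const v)]
          simp
      _ = fderiv ℝ (fderiv ℝ (iteratedFDeriv ℝ m g)) x v (w 0) (Fin.tail w) := by
          rw [hsymm.eq]
      _ = fderiv ℝ (iteratedFDeriv ℝ (m + 1) g) x v w := by
          rw [iteratedFDeriv_succ_eq_comp_left, LinearIsometryEquiv.comp_fderiv]
          rfl

lemma convectionCommutator_eq_iteratedFDeriv {m : ℕ} {f : E → E} {g : E → F}
    (hf : ContDiff ℝ m f) (hg : ContDiff ℝ (m + 1) g) (x : E) :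
    convectionCommutator m f g x
      = iteratedFDeriv ℝ m (fun y => fderiv ℝ g y (f y - f x)) x := by
  have hg' : ContDiff ℝ m (fderiv ℝ g) := hg.fderiv_right le_rfl
  simp only [map_sub]
  rw [fun_iteratedFDeriv_sub_apply (hg'.clm_apply hf).contDiffAt
    (hg'.clm_apply contDiff_const).contDiffAt, iteratedFDeriv_fderiv_apply_const hg]
  rfl

lemma norm_convectionCommutator_le {m : ℕ} {f : E → E} {g : E → F}
    (hf : ContDiff ℝ m f) (hg : ContDiff ℝ (m + 1) g) (x : E) :
    ‖convectionCommutator m f g x‖ ≤ ∑ i ∈ Finset.range m,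
      m.choose i * (‖iteratedFDeriv ℝ (i + 1) g x‖ * ‖iteratedFDeriv ℝ (m - i) f x‖) := by
  have hfx : ContDiff ℝ m fun y => f y - f x := hf.sub contDiff_const
  rw [convectionCommutator_eq_iteratedFDeriv hf hg]
  refine (norm_iteratedFDeriv_clm_apply (hg.fderiv_right le_rfl) hfx x le_rfl).trans_eq ?_
  rw [Finset.sum_range_succ, Nat.sub_self, norm_iteratedFDeriv_zero, sub_self, norm_zero, mul_zero,
    add_zero]
  refine Finset.sum_congr rfl fun i hi => ?_
  have hmi : m - i ≠ 0 := by have := Finset.mem_range.1 hi; omega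
  rw [norm_iteratedFDeriv_fderiv, mul_assoc, fun_iteratedFDeriv_sub_apply
    (hf.of_le (by norm_cast; omega)).contDiffAt contDiffAt_const,
    iteratedFDeriv_const_of_ne hmi, Pi.zero_apply, sub_zero]

lemma memLp_convectionCommutator [MeasurableSpace E] [BorelSpace E] {m : ℕ} {f : E → E}
    {g : E → F} (hf : ContDiff ℝ m f) (hg : ContDiff ℝ (m + 1) g)
    (hgs : HasCompactSupport g) (p : ℝ≥0∞) (μ : Measure E) [IsFiniteMeasureOnCompacts μ] :
    MemLp (convectionCommutator m f g) p μ := by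
  have hconv : ContDiff ℝ m (convection f g) := (hg.fderiv_right le_rfl).clm_apply hf
  have hconv' : Continuous (convection f (iteratedFDeriv ℝ m g)) :=
    ((hg.iteratedFDeriv_right (m := 1) (by rw [add_comm])).continuous_fderiv
      one_ne_zero).clm_apply hf.continuous
  exact (memLp_iteratedFDeriv hconv le_rfl (hasCompactSupport_convection f hgs) p μ).sub
    (hconv'.memLp_of_hasCompactSupport (hasCompactSupport_convection f (hgs.iteratedFDeriv m)))

end Commutator

section Contraction

variable {ι E F : Type*} [Fintype ι] [NormedAddCommGroup E] [NormedSpace ℝ E]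
  [NormedAddCommGroup F] [InnerProductSpace ℝ F] {m : ℕ}

/-- The contraction of two `F`-valued `m`-linear tensors along a finite family `b` of vectors. If
`b` is an orthonormal basis of a Euclidean space, it is the full contraction `A · B`. -/
def contraction (b : ι → E) (A B : E [×m]→L[ℝ] F) : ℝ :=
  ∑ κ : Fin m → ι, ⟪A (b ∘ κ), B (b ∘ κ)⟫

lemma abs_contraction_le (b : ι → E) (A B : E [×m]→L[ℝ] F) :
    |contraction b A B| ≤ (∑ i, ‖b i‖ ^ 2) ^ m * (‖A‖ * ‖B‖) := by
  calc |contraction b A B| ≤ ∑ κ : Fin m → ι, (∏ l, ‖b (κ l)‖ ^ 2) * (‖A‖ * ‖B‖) := by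
        refine (Finset.abs_sum_le_sum_abs _ _).trans (Finset.sum_le_sum fun κ _ => ?_)
        calc |⟪A (b ∘ κ), B (b ∘ κ)⟫| ≤ ‖A (b ∘ κ)‖ * ‖B (b ∘ κ)‖ := abs_real_inner_le_norm _ _
          _ ≤ (‖A‖ * ∏ l, ‖b (κ l)‖) * (‖B‖ * ∏ l, ‖b (κ l)‖) := by
            gcongr
            exacts [A.le_opNorm _, B.le_opNorm _]
          _ = _ := by rw [Finset.prod_pow]; ring
    _ = (∑ i, ‖b i‖ ^ 2) ^ m * (‖A‖ * ‖B‖) := by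
        rw [← Finset.sum_mul, Fintype.sum_pow]

lemma abs_integral_contraction_le {α : Type*} {mα : MeasurableSpace α} {μ : Measure α}
    {p q : ℝ≥0∞} [HolderTriple p q 1] (b : ι → E) {A B : α → E [×m]→L[ℝ] F} (hA : MemLp A p μ)
    (hB : MemLp B q μ) :
    |∫ x, contraction b (A x) (B x) ∂μ| ≤
      (∑ i, ‖b i‖ ^ 2) ^ m * (lpNorm A p μ * lpNorm B q μ) := by
  have hint : Integrable (fun x => ‖A x‖ * ‖B x‖) μ := hA.norm.integrable_mul hB.norm
  calc |∫ x, contraction b (A x) (B x) ∂μ|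
      ≤ ∫ x, (∑ i, ‖b i‖ ^ 2) ^ m * (‖A x‖ * ‖B x‖) ∂μ := by
        rw [← Real.norm_eq_abs]
        exact norm_integral_le_of_norm_le (hint.const_mul _)
          (.of_forall fun x => abs_contraction_le b (A x) (B x))
    _ ≤ (∑ i, ‖b i‖ ^ 2) ^ m * (lpNorm A p μ * lpNorm B q μ) := by
        rw [integral_const_mul]
        gcongr
        exact integral_norm_mul_norm_le hA hB

end Contraction

section CommutatorEstimate

lemma mul_le_of_pow_le_mul_pow {x y a b A B C D : ℝ} {i j : ℕ} (hij : i + j ≠ 0)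
    (hy : 0 ≤ y) (ha : 0 ≤ a) (hb : 0 ≤ b) (hA : 0 ≤ A) (hB : 0 ≤ B) (hC : 0 ≤ C) (hD : 0 ≤ D)
    (hx' : x ^ (i + j) ≤ C ^ (i + j) * (a ^ j * A ^ i))
    (hy' : y ^ (i + j) ≤ D ^ (i + j) * (b ^ i * B ^ j)) :
    x * y ≤ C * D * ((a + b) * (A + B)) := by
  refine le_of_pow_le_pow_left₀ hij (by positivity) ?_
  calc (x * y) ^ (i + j) = x ^ (i + j) * y ^ (i + j) := mul_pow ..
    _ ≤ (C ^ (i + j) * (a ^ j * A ^ i)) * (D ^ (i + j) * (b ^ i * B ^ j)) := by gcongr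
    _ ≤ (C ^ (i + j) * ((a + b) ^ j * (A + B) ^ i)) *
          (D ^ (i + j) * ((a + b) ^ i * (A + B) ^ j)) := by
        gcongr <;> linarith
    _ = (C * D * ((a + b) * (A + B))) ^ (i + j) := by
        rw [mul_pow (C * D), mul_pow C, mul_pow (a + b)]
        ring

variable {E : Type*} [NormedAddCommGroup E] [NormedSpace ℝ E] [FiniteDimensional ℝ E]
  [MeasurableSpace E] [BorelSpace E]

lemma exists_lpNorm_norm_iteratedFDeriv_mul_norm_iteratedFDeriv_le (F G : Type*)
    [NormedAddCommGroup F] [NormedSpace ℝ F] [FiniteDimensional ℝ F] [NormedAddCommGroup G]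
    [NormedSpace ℝ G] [FiniteDimensional ℝ G] (μ : Measure E) [μ.IsAddHaarMeasure] (n : ℕ) :
    ∃ C : ℝ, 0 ≤ C ∧ ∀ (u : E → F) (v : E → G), ContDiff ℝ n u → HasCompactSupport u →
      ContDiff ℝ n v → HasCompactSupport v → ∀ i j, i + j = n →
        lpNorm (fun x => ‖iteratedFDeriv ℝ i u x‖ * ‖iteratedFDeriv ℝ j v x‖) 2 μ ≤
          C * ((lpNorm u ∞ μ + lpNorm v ∞ μ) *
            (lpNorm (iteratedFDeriv ℝ n u) 2 μ + lpNorm (iteratedFDeriv ℝ n v) 2 μ)) := by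
  obtain rfl | hn := eq_or_ne n 0
  · refine ⟨1, zero_le_one, fun u v hu hus hv hvs i j hij => ?_⟩
    obtain ⟨rfl, rfl⟩ := Nat.add_eq_zero_iff.1 hij
    have hsplit : lpNorm (fun x => ‖u x‖ * ‖iteratedFDeriv ℝ 0 v x‖) 2 μ ≤
        lpNorm u ∞ μ * lpNorm (iteratedFDeriv ℝ 0 v) 2 μ :=
      lpNorm_norm_mul_norm_le (hu.continuous.memLp_of_hasCompactSupport hus)
        (memLp_iteratedFDeriv hv le_rfl hvs 2 μ)
    simp only [norm_iteratedFDeriv_zero (f := u), one_mul]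
    exact hsplit.trans (mul_le_mul (le_add_of_nonneg_right lpNorm_nonneg)
      (le_add_of_nonneg_left lpNorm_nonneg) lpNorm_nonneg (add_nonneg lpNorm_nonneg lpNorm_nonneg))
  obtain ⟨C, hC, hu_interp⟩ := exists_pow_lpNorm_iteratedFDeriv_le F μ hn
  obtain ⟨D, hD, hv_interp⟩ := exists_pow_lpNorm_iteratedFDeriv_le G μ hn
  refine ⟨C * D, mul_nonneg hC hD, fun u v hu hus hv hvs i j hij => ?_⟩
  have hi := hu_interp u hu hus i (by omega)
  have hj := hv_interp v hv hvs j (by omega)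
  have hholder : HolderTriple (interpExponent n i) (interpExponent n j) 2 := by
    rw [ENNReal.holderTriple_iff, inv_interpExponent_add_inv_interpExponent hn, ← Nat.cast_add,
      hij, ← inv_interpExponent hn, interpExponent_self hn]
  subst hij
  rw [Nat.add_sub_cancel_left] at hi
  rw [Nat.add_sub_cancel] at hj
  exact (lpNorm_norm_mul_norm_le
    (memLp_iteratedFDeriv hu (by exact_mod_cast i.le_add_right j) hus _ μ)
    (memLp_iteratedFDeriv hv (by exact_mod_cast j.le_add_left i) hvs _ μ)).trans
    (mul_le_of_pow_le_mul_pow hn lpNorm_nonneg lpNorm_nonneg lpNorm_nonneg lpNorm_nonneg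
      lpNorm_nonneg hC hD hi hj)

lemma exists_lpNorm_norm_iteratedFDeriv_succ_mul_norm_iteratedFDeriv_sub_le (F G : Type*)
    [NormedAddCommGroup F] [NormedSpace ℝ F] [FiniteDimensional ℝ F] [NormedAddCommGroup G]
    [NormedSpace ℝ G] [FiniteDimensional ℝ G] (μ : Measure E) [μ.IsAddHaarMeasure] (m : ℕ) :
    ∃ C : ℝ, 0 ≤ C ∧ ∀ (f : E → F) (g : E → G), ContDiff ℝ m f → HasCompactSupport f →
      ContDiff ℝ m g → HasCompactSupport g → ∀ i < m,
        lpNorm (fun x => ‖iteratedFDeriv ℝ (i + 1) f x‖ * ‖iteratedFDeriv ℝ (m - i) g x‖) 2 μ ≤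
          C * ((lpNorm (fderiv ℝ f) ∞ μ + lpNorm (fderiv ℝ g) ∞ μ) *
            (lpNorm (iteratedFDeriv ℝ m f) 2 μ + lpNorm (iteratedFDeriv ℝ m g) 2 μ)) := by
  obtain _ | n := m
  · exact ⟨0, le_rfl, fun _ _ _ _ _ _ i hi => absurd hi i.not_lt_zero⟩
  obtain ⟨C, hC, hprod⟩ := exists_lpNorm_norm_iteratedFDeriv_mul_norm_iteratedFDeriv_le
    (E →L[ℝ] F) (E →L[ℝ] G) μ n
  refine ⟨C, hC, fun f g hf hfs hg hgs i hi => ?_⟩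
  have hf' : ContDiff ℝ n (fderiv ℝ f) := hf.fderiv_right (by norm_cast)
  have hg' : ContDiff ℝ n (fderiv ℝ g) := hg.fderiv_right (by norm_cast)
  have hfn : lpNorm (iteratedFDeriv ℝ n (fderiv ℝ f)) 2 μ
      = lpNorm (iteratedFDeriv ℝ (n + 1) f) 2 μ :=
    lpNorm_congr_norm (memLp_iteratedFDeriv hf' le_rfl (hfs.fderiv ℝ) 2 μ)
      (memLp_iteratedFDeriv hf le_rfl hfs 2 μ) fun _ => norm_iteratedFDeriv_fderiv
  have hgn : lpNorm (iteratedFDeriv ℝ n (fderiv ℝ g)) 2 μ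
      = lpNorm (iteratedFDeriv ℝ (n + 1) g) 2 μ :=
    lpNorm_congr_norm (memLp_iteratedFDeriv hg' le_rfl (hgs.fderiv ℝ) 2 μ)
      (memLp_iteratedFDeriv hg le_rfl hgs 2 μ) fun _ => norm_iteratedFDeriv_fderiv
  have := hprod _ _ hf' (hfs.fderiv ℝ) hg' (hgs.fderiv ℝ) i (n - i) (by omega)
  rw [hfn, hgn] at this
  rw [show n + 1 - i = n - i + 1 by omega]
  simpa only [norm_iteratedFDeriv_fderiv] using this

lemma exists_lpNorm_convectionCommutator_le (F : Type*) [NormedAddCommGroup F] [NormedSpace ℝ F]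
    [FiniteDimensional ℝ F] (μ : Measure E) [μ.IsAddHaarMeasure] (m : ℕ) :
    ∃ C : ℝ, 0 ≤ C ∧ ∀ (f : E → E) (g : E → F), ContDiff ℝ m f → HasCompactSupport f →
      ContDiff ℝ (m + 1) g → HasCompactSupport g →
        lpNorm (convectionCommutator m f g) 2 μ ≤
          C * ((lpNorm (fderiv ℝ f) ∞ μ + lpNorm (fderiv ℝ g) ∞ μ) *
            (lpNorm (iteratedFDeriv ℝ m f) 2 μ + lpNorm (iteratedFDeriv ℝ m g) 2 μ)) := by
  obtain ⟨C, hC, hprod⟩ :=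
    exists_lpNorm_norm_iteratedFDeriv_succ_mul_norm_iteratedFDeriv_sub_le F E μ m
  refine ⟨∑ i ∈ Finset.range m, m.choose i * C, by positivity, fun f g hf hfs hg hgs => ?_⟩
  have hgm : ContDiff ℝ m g := hg.of_le (by norm_cast; omega)
  let P (i : ℕ) (x : E) : ℝ := ‖iteratedFDeriv ℝ (i + 1) g x‖ * ‖iteratedFDeriv ℝ (m - i) f x‖
  have hP : ∀ i ∈ Finset.range m, MemLp ((m.choose i : ℝ) • P i) 2 μ := fun i hi =>
    ((memLp_iteratedFDeriv hf (by norm_cast; omega) hfs 2 μ).norm.smul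
      (memLp_iteratedFDeriv hgm (by norm_cast; exact Finset.mem_range.1 hi) hgs
        ∞ μ).norm).const_smul (m.choose i : ℝ)
  rw [Finset.sum_mul, add_comm (lpNorm (fderiv ℝ f) ∞ μ),
    add_comm (lpNorm (iteratedFDeriv ℝ m f) 2 μ)]
  calc lpNorm (convectionCommutator m f g) 2 μ
      ≤ lpNorm (∑ i ∈ Finset.range m, (m.choose i : ℝ) • P i) 2 μ :=
        lpNorm_mono_real (memLp_finsetSum' _ hP) fun x => by
          rw [Finset.sum_apply]
          exact norm_convectionCommutator_le hf hg x
    _ ≤ ∑ i ∈ Finset.range m, lpNorm ((m.choose i : ℝ) • P i) 2 μ := lpNorm_sum_le hP one_le_two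
    _ = ∑ i ∈ Finset.range m, m.choose i * lpNorm (P i) 2 μ := by
        simp only [lpNorm_const_smul, coe_nnnorm, Real.norm_natCast]
    _ ≤ _ := by
        simp only [mul_assoc]
        gcongr with i hi
        exact hprod g f hgm hgs hf hfs i (Finset.mem_range.1 hi)

theorem commutator_triple_product_estimate_general {ι F : Type*} [Fintype ι]
    [NormedAddCommGroup F] [InnerProductSpace ℝ F] [FiniteDimensional ℝ F] (b : ι → E)
    (μ : Measure E) [μ.IsAddHaarMeasure] (m : ℕ) :
    ∃ C : ℝ, 0 < C ∧ ∀ (f : E → E) (g k : E → F),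
      ContDiff ℝ m f → HasCompactSupport f → ContDiff ℝ (m + 1) g → HasCompactSupport g →
      ContDiff ℝ m k → HasCompactSupport k →
        |∫ x, contraction b (convectionCommutator m f g x) (iteratedFDeriv ℝ m k x) ∂μ| ≤
          C * ((eLpNorm (iteratedFDeriv ℝ m f) 2 μ).toReal ^ 2 +
              (eLpNorm (iteratedFDeriv ℝ m g) 2 μ).toReal ^ 2 +
              (eLpNorm (iteratedFDeriv ℝ m k) 2 μ).toReal ^ 2) *
            ((eLpNorm (fderiv ℝ f) ∞ μ).toReal + (eLpNorm (fderiv ℝ g) ∞ μ).toReal) := by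
  obtain ⟨C, hC, hcomm⟩ := exists_lpNorm_convectionCommutator_le F μ m
  set K := (∑ i, ‖b i‖ ^ 2) ^ m
  have hKC : 0 ≤ K * C := mul_nonneg (by positivity) hC
  refine ⟨K * C + 1, by positivity, fun f g k hf hfs hg hgs hk hks => ?_⟩
  have hfL2 := memLp_iteratedFDeriv hf le_rfl hfs 2 μ
  have hgL2 := memLp_iteratedFDeriv hg (by norm_cast; omega : (m : WithTop ℕ∞) ≤ m + 1) hgs 2 μ
  have hcommL2 := memLp_convectionCommutator hf hg hgs 2 μ
  have hkL2 := memLp_iteratedFDeriv hk le_rfl hks 2 μ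
  rw [toReal_eLpNorm hfL2.1, toReal_eLpNorm hgL2.1, toReal_eLpNorm hkL2.1,
    toReal_eLpNorm (measurable_fderiv ℝ f).aestronglyMeasurable,
    toReal_eLpNorm (measurable_fderiv ℝ g).aestronglyMeasurable]
  set A := lpNorm (iteratedFDeriv ℝ m f) 2 μ
  set B := lpNorm (iteratedFDeriv ℝ m g) 2 μ
  set W := lpNorm (iteratedFDeriv ℝ m k) 2 μ
  set M := lpNorm (fderiv ℝ f) ∞ μ + lpNorm (fderiv ℝ g) ∞ μ
  have hW : 0 ≤ W := lpNorm_nonneg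
  have hM : 0 ≤ M := add_nonneg lpNorm_nonneg lpNorm_nonneg
  calc |∫ x, contraction b (convectionCommutator m f g x) (iteratedFDeriv ℝ m k x) ∂μ|
      ≤ K * (lpNorm (convectionCommutator m f g) 2 μ * W) :=
        abs_integral_contraction_le b hcommL2 hkL2
    _ ≤ K * (C * (M * (A + B)) * W) := by
        gcongr
        exact hcomm f g hf hfs hg hgs
    _ = K * C * M * ((A + B) * W) := by ring
    _ ≤ K * C * M * (A ^ 2 + B ^ 2 + W ^ 2) := by
        refine mul_le_mul_of_nonneg_left ?_ (mul_nonneg hKC hM)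
        nlinarith [sq_nonneg (A - W), sq_nonneg (B - W), sq_nonneg A, sq_nonneg B]
    _ ≤ (K * C + 1) * (A ^ 2 + B ^ 2 + W ^ 2) * M := by
        nlinarith [mul_nonneg hM (by positivity : 0 ≤ A ^ 2 + B ^ 2 + W ^ 2)]

end CommutatorEstimate

/-- For `m ≥ 2` there is `C = C(m)` such that for all
`f, g, k ∈ C₀^∞(ℝ³; ℝ³)`,
`|∫ [∇^m, f·∇]g · ∇^m k dx| ≤ C (‖∇^m f‖² + ‖∇^m g‖² + ‖∇^m k‖²)(‖∇f‖_∞ + ‖∇g‖_∞)`. -/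
theorem commutator_triple_product_estimate (m : ℕ) (hm : 2 ≤ m) :
    ∃ C : ℝ, 0 < C ∧
      ∀ f g k : E3 → E3,
        ContDiff ℝ (⊤ : ℕ∞) f → HasCompactSupport f →
        ContDiff ℝ (⊤ : ℕ∞) g → HasCompactSupport g →
        ContDiff ℝ (⊤ : ℕ∞) k → HasCompactSupport k →
        |∫ x : E3, contract m (commGrad m f g x) (iteratedFDeriv ℝ m k x)|
          ≤ C * ((eLpNorm (iteratedFDeriv ℝ m f) 2 volume).toReal ^ 2
                  + (eLpNorm (iteratedFDeriv ℝ m g) 2 volume).toReal ^ 2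
                  + (eLpNorm (iteratedFDeriv ℝ m k) 2 volume).toReal ^ 2)
              * ((eLpNorm (fun x => fderiv ℝ f x) ∞ volume).toReal
                  + (eLpNorm (fun x => fderiv ℝ g x) ∞ volume).toReal) := by
  obtain ⟨C, hC, hbound⟩ := commutator_triple_product_estimate_general (F := E3)
    (fun i : Fin 3 => EuclideanSpace.single i (1 : ℝ)) volume m
  have hle {l : ℕ} : (l : WithTop ℕ∞) ≤ (⊤ : ℕ∞) := by exact_mod_cast le_top
  exact ⟨C, hC, fun f g k hf hfs hg hgs hk hks => hbound f g k (hf.of_le hle) hfs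
    (hg.of_le (by exact_mod_cast le_top)) hgs (hk.of_le hle) hks⟩
end
end

section
/- Let 0 ≤ θ < 2 and q* ∈ [2, 2(3−θ)], and write r = √(x₁²+x₂²) for x = (x₁,x₂,x₃) ∈ ℝ³. Then there exists a positive constant C = C(q*,θ) such that for all f ∈ C₀^∞(ℝ³), ‖ f/r^{θ/q*} ‖_{L^{q*}(ℝ³)} ≤ C ‖f‖_{L²(ℝ³)}^{(3−θ)/q* − 1/2} ‖∇f‖_{L²(ℝ³)}^{3/2 − (3−θ)/q*}. -/
open MeasureTheory Set ENNReal

noncomputable section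

/-- Distance to the `x₃`-axis. -/
def rad (x : E3) : ℝ := Real.sqrt (x 0 ^ 2 + x 1 ^ 2)

/-!
Let `P` be a projection of rank `k` on an `n`-dimensional space `E`. The dilation
`x ↦ (x - P x) + t • P x` has determinant `t ^ k` and scales `‖P x‖` by `t`, so integrating the
derivative of `g` along the rays `t ↦ (x - P x) + t • P x`, `1 < t`, gives for `θ < k`
`∫ ‖g‖ ‖P x‖ ^ (-θ) ≤ (k - θ)⁻¹ ∫ ‖Dg‖ ‖P x‖ ^ (1 - θ)`.
Iterating this on a smooth majorant lowers the exponent `θ` until it is nonpositive, so the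
left-hand side is finite. Applied to `g = ‖f‖ ^ q`, `q = θ + m (1 - θ / p)`, and combined with
Hölder's inequality, it bounds `I = ∫ ‖f‖ ^ q ‖P x‖ ^ (-θ)`, when `1 ≤ θ ≤ p`, by a multiple of
`(∫ ‖Df‖ ^ p) ^ p⁻¹ (∫ ‖f‖ ^ m) ^ (θ⁻¹ - p⁻¹) I ^ (1 - θ⁻¹)`, and the finite factor
`I ^ (1 - θ⁻¹)` is absorbed. For `θ < 1` one interpolates between the exponents `0` and `1`.
The remaining integral `∫ ‖f‖ ^ m` lies between `∫ ‖f‖ ^ p` and `∫ ‖f‖ ^ (n p / (n - p))`, and the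
latter is controlled by the Gagliardo–Nirenberg–Sobolev inequality.
-/

open Module
open scoped NNReal

lemma le_rpow_of_le_mul_rpow_one_sub_inv {a b : ℝ≥0∞} {s : ℝ} (hs : 0 < s) (ha : a ≠ ∞)
    (h : a ≤ b * a ^ (1 - s⁻¹)) : a ≤ b ^ s := by
  rcases eq_or_ne a 0 with rfl | ha0
  · exact zero_le
  rw [← ENNReal.rpow_inv_le_iff hs,
    ← ENNReal.mul_le_mul_iff_left (c := a ^ (1 - s⁻¹)) (by simp [*]) (by simp [*]),
    ← ENNReal.rpow_add _ _ ha0 ha]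
  simpa using h

lemma lintegral_Ioi_one_ofReal_rpow {a : ℝ} (ha : a < -1) :
    ∫⁻ t in Ioi (1 : ℝ), ENNReal.ofReal (t ^ a) = ENNReal.ofReal (-(a + 1))⁻¹ := by
  rw [← ofReal_integral_eq_lintegral_ofReal (integrableOn_Ioi_rpow_of_lt ha one_pos),
    integral_Ioi_rpow_of_lt ha one_pos, Real.one_rpow, neg_div, one_div, ← inv_neg]
  exact ae_restrict_of_forall_mem measurableSet_Ioi fun t ht =>
    Real.rpow_nonneg (one_pos.trans ht).le a

lemma lintegral_rpow_mul_rpow_mul_rpow_le {α : Type*} [MeasurableSpace α] {ν : Measure α}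
    {u v w : α → ℝ≥0∞} (hu : AEMeasurable u ν) (hv : AEMeasurable v ν) (hw : AEMeasurable w ν)
    {a b c : ℝ} (ha : 0 ≤ a) (hb : 0 ≤ b) (hc : 0 ≤ c) (habc : a + b + c = 1) :
    ∫⁻ x, u x ^ a * v x ^ b * w x ^ c ∂ν ≤
      (∫⁻ x, u x ∂ν) ^ a * (∫⁻ x, v x ∂ν) ^ b * (∫⁻ x, w x ∂ν) ^ c := by
  simpa [Fin.prod_univ_three] using ENNReal.lintegral_prod_norm_pow_le (μ := ν) Finset.univ
    (f := ![u, v, w]) (p := ![a, b, c]) (by simp [Fin.forall_fin_succ, *])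
    (by simpa [Fin.sum_univ_three]) (by simp [Fin.forall_fin_succ, *])

lemma lintegral_rpow_add_mul_rpow_le {α : Type*} [MeasurableSpace α] {ν : Measure α}
    {u w : α → ℝ≥0∞} (hu : AEMeasurable u ν) (hw : AEMeasurable w ν) {q m a b : ℝ} (hq : 0 ≤ q)
    (hm : 0 ≤ m) (ha : 0 ≤ a) (hb : 0 ≤ b) (hab : a + b = 1) :
    ∫⁻ x, u x ^ (q * a + m * b) * w x ^ a ∂ν ≤
      (∫⁻ x, u x ^ q * w x ∂ν) ^ a * (∫⁻ x, u x ^ m ∂ν) ^ b := by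
  have hsplit (x : α) : u x ^ (q * a + m * b) * w x ^ a =
      (u x ^ q * w x) ^ a * (u x ^ m) ^ b := by
    rw [ENNReal.rpow_add_of_nonneg _ _ (by positivity) (by positivity),
      ENNReal.mul_rpow_of_nonneg _ _ ha, ENNReal.rpow_mul, ENNReal.rpow_mul]
    ring
  simp only [hsplit]
  exact ENNReal.lintegral_mul_norm_pow_le ((hu.pow_const q).mul hw) (hu.pow_const m) ha hb hab

lemma exists_contDiff_hasCompactSupport_enorm_le {E : Type*} [NormedAddCommGroup E]
    [NormedSpace ℝ E] [FiniteDimensional ℝ E] {h : E → ℝ} (hc : Continuous h)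
    (hs : HasCompactSupport h) :
    ∃ φ : E → ℝ, ContDiff ℝ 1 φ ∧ HasCompactSupport φ ∧ ∀ x, ‖h x‖ₑ ≤ ‖φ x‖ₑ := by
  obtain ⟨B, hB⟩ := hs.exists_bound_of_continuous hc
  obtain ⟨R, hR0, hR⟩ := hs.isBounded.subset_closedBall_lt 0 0
  let bump : ContDiffBump (0 : E) := ⟨R, R + 1, hR0, lt_add_one R⟩
  refine ⟨fun x => B * bump x, contDiff_const.mul bump.contDiff,
    bump.hasCompactSupport.mul_left, fun x => enorm_le_iff_norm_le.2 ?_⟩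
  change ‖h x‖ ≤ ‖B * bump x‖
  by_cases hx : x ∈ tsupport h
  · rw [bump.one_of_mem_closedBall (hR hx), mul_one]
    exact (hB x).trans (le_abs_self B)
  · rw [image_eq_zero_of_notMem_tsupport hx, norm_zero]
    exact norm_nonneg _

lemma eLpNorm_inv_norm_rpow_smul_rpow_le {α V F : Type*} [MeasurableSpace α]
    [NormedAddCommGroup V] [NormedAddCommGroup F] [NormedSpace ℝ F] {q : ℝ≥0} (hq : q ≠ 0)
    {θ : ℝ} (hθ : 0 ≤ θ) (w : α → V) (f : α → F) (ν : Measure α) :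
    eLpNorm (fun x => (‖w x‖ ^ (θ / q))⁻¹ • f x) q ν ^ (q : ℝ) ≤
      ∫⁻ x, ‖f x‖ₑ ^ (q : ℝ) * ‖w x‖ₑ ^ (-θ) ∂ν := by
  have hq0 : (q : ℝ) ≠ 0 := mod_cast hq
  rw [eLpNorm_nnreal_pow_eq_lintegral hq]
  gcongr with x
  rw [enorm_smul, ENNReal.mul_rpow_of_nonneg _ _ q.coe_nonneg, mul_comm]
  gcongr
  rcases eq_or_ne (‖w x‖ ^ (θ / q)) 0 with hw | hw
  · simp [hw, pos_iff_ne_zero.2 hq]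
  · rw [enorm_inv hw, Real.enorm_rpow_of_nonneg (norm_nonneg _) (by positivity), enorm_norm,
      ENNReal.inv_rpow, ← ENNReal.rpow_mul, div_mul_cancel₀ _ hq0, ENNReal.rpow_neg]

section Ray

variable {E : Type*} [NormedAddCommGroup E] [NormedSpace ℝ E]
  {G : Type*} [NormedAddCommGroup G] [NormedSpace ℝ G] [CompleteSpace G]

lemma enorm_le_lintegral_Ioi_enorm_fderiv {g : E → G} (hg : ContDiff ℝ 1 g)
    (hgs : HasCompactSupport g) (x : E) {v : E} (hv : v ≠ 0) (a : ℝ) :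
    ‖g (x + a • v)‖ₑ ≤ ∫⁻ t in Ioi a, ‖fderiv ℝ g (x + t • v)‖ₑ * ‖v‖ₑ := by
  let ray : ℝ → E := fun t => x + t • v
  have hray : Topology.IsClosedEmbedding ray :=
    (Homeomorph.addLeft x).isClosedEmbedding.comp (isClosedEmbedding_smul_left hv)
  have hderiv (t : ℝ) : deriv (g ∘ ray) t = fderiv ℝ g (ray t) v := by
    have hray' : HasDerivAt ray v t := by
      simpa [ray] using ((hasDerivAt_id' t).smul_const v).const_add x
    exact ((hg.differentiable one_ne_zero _).hasFDerivAt.comp_hasDerivAt t hray').deriv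
  calc ‖g (ray a)‖ₑ = ‖∫ t in Ioi a, deriv (g ∘ ray) t‖ₑ := by
        rw [HasCompactSupport.integral_Ioi_deriv_eq (hg.comp (by fun_prop))
          (hgs.comp_isClosedEmbedding hray), enorm_neg, Function.comp_apply]
    _ ≤ ∫⁻ t in Ioi a, ‖deriv (g ∘ ray) t‖ₑ := enorm_integral_le_lintegral_enorm _
    _ ≤ ∫⁻ t in Ioi a, ‖fderiv ℝ g (ray t)‖ₑ * ‖v‖ₑ := by
        gcongr with t
        rw [hderiv]
        exact (fderiv ℝ g (ray t)).le_opENorm v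

end Ray

/-- The linear map that scales the range of the projection `P` by `t` and fixes its kernel. It is
stated for an arbitrary endomorphism `P`; only for idempotent `P` does it have this meaning. -/
def rangeDilation {E : Type*} [AddCommGroup E] [Module ℝ E] (P : E →ₗ[ℝ] E) (t : ℝ) :
    E →ₗ[ℝ] E :=
  (1 - P) + t • P

section RangeDilation

variable {E : Type*} [AddCommGroup E] [Module ℝ E] {P : E →ₗ[ℝ] E}

lemma rangeDilation_apply (P : E →ₗ[ℝ] E) (t : ℝ) (x : E) :
    rangeDilation P t x = (x - P x) + t • P x := rfl

lemma apply_rangeDilation (hP : IsIdempotentElem P) (t : ℝ) (x : E) :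
    P (rangeDilation P t x) = t • P x := by
  have hPP : P (P x) = P x := congr($hP x)
  simp [rangeDilation_apply, hPP]

lemma det_rangeDilation [FiniteDimensional ℝ E] (hP : IsIdempotentElem P) (t : ℝ) :
    LinearMap.det (rangeDilation P t) = t ^ finrank ℝ P.range := by
  have hproj := LinearMap.IsIdempotentElem.isProj_range P hP
  set e := P.range.prodEquivOfIsCompl P.ker hproj.isCompl
  have hPconj : P = e.conj (.prodMap .id 0) := hproj.eq_conj_prodMap
  have hconj : rangeDilation P t = e.conj (.prodMap (t • .id) .id) := calc
    rangeDilation P t = (e.conj .id - e.conj (.prodMap .id 0)) + t • e.conj (.prodMap .id 0) := by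
      rw [← hPconj, e.conj_id]; rfl
    _ = e.conj (.prodMap (t • .id) .id) := by
      rw [← map_sub, ← map_smul, ← map_add]
      congr 1
      ext x <;> simp
  rw [hconj, LinearEquiv.conj_apply, LinearMap.comp_assoc, LinearMap.det_conj,
    LinearMap.det_prodMap, LinearMap.det_smul, LinearMap.det_id, LinearMap.det_id, mul_one, mul_one]

end RangeDilation

section Hardy

variable {E : Type*} [NormedAddCommGroup E] [NormedSpace ℝ E] {P : E →ₗ[ℝ] E}
  {G : Type*} [NormedAddCommGroup G] [NormedSpace ℝ G] [CompleteSpace G]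

lemma enorm_mul_rpow_le_lintegral_rangeDilation (hP : IsIdempotentElem P) (θ : ℝ) {g : E → G}
    (hg : ContDiff ℝ 1 g) (hgs : HasCompactSupport g) {x : E} (hx : P x ≠ 0) :
    ‖g x‖ₑ * ‖P x‖ₑ ^ (-θ) ≤ ∫⁻ t in Ioi (1 : ℝ), ENNReal.ofReal (t ^ (θ - 1)) *
      (‖fderiv ℝ g (rangeDilation P t x)‖ₑ * ‖P (rangeDilation P t x)‖ₑ ^ (1 - θ)) := by
  have hx0 : ‖P x‖ₑ ≠ 0 := enorm_ne_zero.2 hx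
  have hray := enorm_le_lintegral_Ioi_enorm_fderiv hg hgs (x - P x) hx 1
  rw [one_smul, sub_add_cancel] at hray
  grw [hray]
  rw [← lintegral_mul_const' _ _ (ENNReal.rpow_ne_top_of_ne_zero hx0 enorm_ne_top)]
  refine setLIntegral_mono' measurableSet_Ioi fun t (ht : 1 < t) => le_of_eq ?_
  have ht0 : 0 < t := one_pos.trans ht
  have hcancel : ENNReal.ofReal (t ^ (θ - 1)) * ENNReal.ofReal (t ^ (1 - θ)) = 1 := by
    rw [← ENNReal.ofReal_mul (by positivity), ← Real.rpow_add ht0]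
    simp
  have hPt : ‖P (rangeDilation P t x)‖ₑ ^ (1 - θ) =
      ENNReal.ofReal (t ^ (1 - θ)) * (‖P x‖ₑ * ‖P x‖ₑ ^ (-θ)) := by
    rw [apply_rangeDilation hP, enorm_smul, Real.enorm_of_nonneg ht0.le,
      ENNReal.mul_rpow_of_ne_top ENNReal.ofReal_ne_top enorm_ne_top,
      ENNReal.ofReal_rpow_of_pos ht0, sub_eq_add_neg 1 θ, ENNReal.rpow_add _ _ hx0 enorm_ne_top,
      ENNReal.rpow_one]
  rw [hPt, ← rangeDilation_apply, mul_left_comm ‖_‖ₑ (ENNReal.ofReal _), ← mul_assoc, hcancel,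
    one_mul, mul_assoc]

variable [FiniteDimensional ℝ E] [MeasurableSpace E] [BorelSpace E]
  {μ : Measure E} [μ.IsAddHaarMeasure]

lemma lintegral_comp_rangeDilation (hP : IsIdempotentElem P) {t : ℝ} (ht : t ≠ 0)
    {φ : E → ℝ≥0∞} (hφ : Measurable φ) :
    ∫⁻ x, φ (rangeDilation P t x) ∂μ =
      ENNReal.ofReal |(t ^ finrank ℝ P.range)⁻¹| * ∫⁻ x, φ x ∂μ := by
  have hdet : LinearMap.det (rangeDilation P t) ≠ 0 := by
    rw [det_rangeDilation hP]
    exact pow_ne_zero _ ht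
  rw [← lintegral_map hφ (rangeDilation P t).continuous_of_finiteDimensional.measurable,
    Measure.map_linearMap_addHaar_eq_smul_addHaar _ hdet, lintegral_smul_measure,
    det_rangeDilation hP, smul_eq_mul]

lemma ae_apply_ne_zero (hP0 : P ≠ 0) : ∀ᵐ x ∂μ, P x ≠ 0 :=
  measure_eq_zero_iff_ae_notMem.1 <|
    Measure.addHaar_submodule μ P.ker fun h => hP0 (LinearMap.ker_eq_top.1 h)

lemma measurable_enorm_apply_rpow (P : E →ₗ[ℝ] E) (a : ℝ) :
    Measurable fun x => ‖P x‖ₑ ^ a :=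
  P.continuous_of_finiteDimensional.enorm.measurable.pow_const a

lemma measurable_rangeDilation (P : E →ₗ[ℝ] E) :
    Measurable fun z : E × ℝ => rangeDilation P z.2 z.1 := by
  have hPc : Continuous P := P.continuous_of_finiteDimensional
  simp only [rangeDilation_apply]
  fun_prop

theorem lintegral_enorm_mul_rpow_neg_le (hP : IsIdempotentElem P) (hP0 : P ≠ 0) {θ : ℝ}
    (hθ : θ < finrank ℝ P.range) {g : E → G} (hg : ContDiff ℝ 1 g)
    (hgs : HasCompactSupport g) :
    ∫⁻ x, ‖g x‖ₑ * ‖P x‖ₑ ^ (-θ) ∂μ ≤ ENNReal.ofReal (finrank ℝ P.range - θ)⁻¹ *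
      ∫⁻ x, ‖fderiv ℝ g x‖ₑ * ‖P x‖ₑ ^ (1 - θ) ∂μ := by
  set k := finrank ℝ P.range
  set Φ : E → ℝ≥0∞ := fun x => ‖fderiv ℝ g x‖ₑ * ‖P x‖ₑ ^ (1 - θ)
  have hΦ : Measurable Φ := (hg.continuous_fderiv one_ne_zero).enorm.measurable.mul
    (measurable_enorm_apply_rpow P _)
  calc ∫⁻ x, ‖g x‖ₑ * ‖P x‖ₑ ^ (-θ) ∂μ
      ≤ ∫⁻ x, (∫⁻ t in Ioi (1 : ℝ),
          ENNReal.ofReal (t ^ (θ - 1)) * Φ (rangeDilation P t x)) ∂μ := by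
        refine lintegral_mono_ae ?_
        filter_upwards [ae_apply_ne_zero hP0] with x hx
        exact enorm_mul_rpow_le_lintegral_rangeDilation hP θ hg hgs hx
    _ = ∫⁻ t in Ioi (1 : ℝ), ∫⁻ x,
          ENNReal.ofReal (t ^ (θ - 1)) * Φ (rangeDilation P t x) ∂μ :=
        lintegral_lintegral_swap (Measurable.aemeasurable
          ((measurable_snd.pow_const _).ennreal_ofReal.mul
            (hΦ.comp (measurable_rangeDilation P))))
    _ = ∫⁻ t in Ioi (1 : ℝ), ENNReal.ofReal (t ^ (θ - 1 - k)) * ∫⁻ x, Φ x ∂μ := by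
        refine setLIntegral_congr_fun measurableSet_Ioi fun t (ht : 1 < t) => ?_
        have ht0 : 0 < t := one_pos.trans ht
        rw [lintegral_const_mul' _ _ ENNReal.ofReal_ne_top,
          lintegral_comp_rangeDilation hP ht0.ne' hΦ, ← mul_assoc,
          ← ENNReal.ofReal_mul (by positivity), abs_of_nonneg (by positivity),
          Real.rpow_sub ht0 _ k, Real.rpow_natCast, div_eq_mul_inv]
    _ = ENNReal.ofReal (k - θ)⁻¹ * ∫⁻ x, Φ x ∂μ := by
        rw [lintegral_mul_const _ (by fun_prop), lintegral_Ioi_one_ofReal_rpow (by linarith)]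
        ring_nf

lemma lintegral_enorm_mul_rpow_neg_lt_top (hP : IsIdempotentElem P) (hP0 : P ≠ 0) {θ : ℝ}
    (hθ : θ < finrank ℝ P.range) {h : E → ℝ} (hc : Continuous h) (hs : HasCompactSupport h) :
    ∫⁻ x, ‖h x‖ₑ * ‖P x‖ₑ ^ (-θ) ∂μ < ∞ := by
  obtain ⟨n, hn⟩ := exists_nat_ge θ
  induction n generalizing θ h with
  | zero =>
    have hθ0 : 0 ≤ -θ := by simpa using hn
    have hcont : Continuous fun x => h x * ‖P x‖ ^ (-θ) :=
      hc.mul (P.continuous_of_finiteDimensional.norm.rpow_const fun _ => .inr hθ0)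
    simpa [hasFiniteIntegral_iff_enorm, enorm_mul, Real.enorm_rpow_of_nonneg, hθ0] using
      (hcont.integrable_of_hasCompactSupport hs.mul_right (μ := μ)).2
  | succ n ih =>
    obtain ⟨φ, hφ, hφs, hle⟩ := exists_contDiff_hasCompactSupport_enorm_le hc hs
    calc ∫⁻ x, ‖h x‖ₑ * ‖P x‖ₑ ^ (-θ) ∂μ
        ≤ ∫⁻ x, ‖φ x‖ₑ * ‖P x‖ₑ ^ (-θ) ∂μ := by
          gcongr with x
          exact hle x
      _ ≤ ENNReal.ofReal (finrank ℝ P.range - θ)⁻¹ *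
            ∫⁻ x, ‖‖fderiv ℝ φ x‖‖ₑ * ‖P x‖ₑ ^ (-(θ - 1)) ∂μ := by
          simpa only [enorm_norm, neg_sub] using
            lintegral_enorm_mul_rpow_neg_le hP hP0 hθ hφ hφs
      _ < ∞ := by
          push_cast at hn
          exact ENNReal.mul_lt_top ENNReal.ofReal_lt_top (ih (by linarith)
            (hφ.continuous_fderiv one_ne_zero).norm (hφs.fderiv ℝ).norm (by linarith))

lemma lintegral_rpow_enorm_mul_rpow_neg_lt_top (hP : IsIdempotentElem P) (hP0 : P ≠ 0) {F : Type*}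
    [NormedAddCommGroup F] {f : E → F} {q θ : ℝ} (hq : 0 < q) (hθ : θ < finrank ℝ P.range)
    (hf : Continuous f) (hfs : HasCompactSupport f) :
    ∫⁻ x, ‖f x‖ₑ ^ q * ‖P x‖ₑ ^ (-θ) ∂μ < ∞ := by
  simpa [Real.enorm_rpow_of_nonneg, hq.le] using
    lintegral_enorm_mul_rpow_neg_lt_top (μ := μ) hP hP0 hθ
      (hf.norm.rpow_const fun _ => .inr hq.le)
      (hfs.comp_left (g := fun y => ‖y‖ ^ q) (by simp [hq.ne']))

end Hardy

section Exponents

variable {p q n θ a b : ℝ}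

lemma exists_add_eq_one_mul_add_mul_eq (hpq : p ≤ q) (hq : q ≤ p * (n - θ) / (n - p)) :
    ∃ a b : ℝ, 0 ≤ a ∧ 0 ≤ b ∧ a + b = 1 ∧ p * a + p * (n - θ) / (n - p) * b = q := by
  obtain ⟨a, b, ha, hb, hab, hqab⟩ : q ∈ segment ℝ p (p * (n - θ) / (n - p)) :=
    (segment_eq_Icc (hpq.trans hq)).symm ▸ ⟨hpq, hq⟩
  exact ⟨a, b, ha, hb, hab, by rw [← hqab]; simp only [smul_eq_mul, mul_comm]⟩

lemma mul_one_sub_div_eq (hp : 0 < p) (hq : 0 < q) (hpn : 0 < n - p) (hab : a + b = 1)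
    (hqab : p * a + p * (n - θ) / (n - p) * b = q) :
    a * (1 - θ / p) = 1 / p * ((n - θ) / q - n / p + 1) * q := by
  have hclear : ((n - θ) / q - n / p + 1) * q = n - θ - n / p * q + q := by field_simp
  rw [mul_assoc, hclear, ← hqab, eq_sub_of_add_eq hab]
  field_simp
  ring

lemma div_add_mul_one_sub_div_eq (hp : 0 < p) (hq : 0 < q) (hpn : 0 < n - p) (hab : a + b = 1)
    (hqab : p * a + p * (n - θ) / (n - p) * b = q) :
    θ / p + n / (n - p) * b * (1 - θ / p) = 1 / p * (n / p - (n - θ) / q) * q := by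
  have hclear : (n / p - (n - θ) / q) * q = n / p * q - (n - θ) := by field_simp
  rw [mul_assoc (1 / p), hclear, ← hqab, eq_sub_of_add_eq hab]
  field_simp
  ring

end Exponents

section Power

variable {E : Type*} [NormedAddCommGroup E] [NormedSpace ℝ E] [FiniteDimensional ℝ E]
  [MeasurableSpace E] [BorelSpace E] {μ : Measure E} {P : E →ₗ[ℝ] E}
  {F : Type*} [NormedAddCommGroup F] {f : E → F}

lemma lintegral_rpow_enorm_mul_enorm_fderiv_mul_rpow_le [NormedSpace ℝ F] {p m θ : ℝ}
    (hp : 0 < p) (hm : 0 < m) (hθ1 : 1 ≤ θ) (hθp : θ ≤ p) (hf : ContDiff ℝ 1 f) :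
    ∫⁻ x, ‖f x‖ₑ ^ (θ + m * (1 - θ / p) - 1) * ‖fderiv ℝ f x‖ₑ * ‖P x‖ₑ ^ (1 - θ) ∂μ ≤
      (∫⁻ x, ‖fderiv ℝ f x‖ₑ ^ p ∂μ) ^ p⁻¹ * (∫⁻ x, ‖f x‖ₑ ^ m ∂μ) ^ (θ⁻¹ - p⁻¹) *
        (∫⁻ x, ‖f x‖ₑ ^ (θ + m * (1 - θ / p)) * ‖P x‖ₑ ^ (-θ) ∂μ) ^ (1 - θ⁻¹) := by
  have hθ0 : 0 < θ := by linarith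
  have hθp' : 0 ≤ 1 - θ / p := sub_nonneg.2 ((div_le_one hp).2 hθp)
  have hθinv : 0 ≤ 1 - θ⁻¹ := sub_nonneg.2 (inv_le_one_of_one_le₀ hθ1)
  have hθpinv : 0 ≤ θ⁻¹ - p⁻¹ := sub_nonneg.2 (inv_anti₀ hθ0 hθp)
  set q := θ + m * (1 - θ / p) with hq
  have hsplit (x : E) : ‖f x‖ₑ ^ (q - 1) * ‖fderiv ℝ f x‖ₑ * ‖P x‖ₑ ^ (1 - θ) =
      (‖fderiv ℝ f x‖ₑ ^ p) ^ p⁻¹ * (‖f x‖ₑ ^ m) ^ (θ⁻¹ - p⁻¹) *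
        (‖f x‖ₑ ^ q * ‖P x‖ₑ ^ (-θ)) ^ (1 - θ⁻¹) := by
    have hfexp : q - 1 = m * (θ⁻¹ - p⁻¹) + q * (1 - θ⁻¹) := by rw [hq]; field_simp; ring
    have hPexp : 1 - θ = -θ * (1 - θ⁻¹) := by field_simp; ring
    rw [ENNReal.rpow_rpow_inv hp.ne', ENNReal.mul_rpow_of_nonneg _ _ hθinv, hPexp, hfexp,
      ENNReal.rpow_add_of_nonneg _ _ (by positivity) (by positivity)]
    simp only [ENNReal.rpow_mul]
    ring
  simp only [hsplit]
  exact lintegral_rpow_mul_rpow_mul_rpow_le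
    ((hf.continuous_fderiv one_ne_zero).enorm.measurable.pow_const p).aemeasurable
    (hf.continuous.enorm.measurable.pow_const m).aemeasurable
    ((hf.continuous.enorm.measurable.pow_const q).mul
      (measurable_enorm_apply_rpow P _)).aemeasurable
    (by positivity) hθpinv hθinv (by ring)

variable [InnerProductSpace ℝ F] [μ.IsAddHaarMeasure]

lemma lintegral_rpow_enorm_mul_rpow_neg_le (hP : IsIdempotentElem P) (hP0 : P ≠ 0) {q θ : ℝ}
    (hq : 1 < q) (hθ : θ < finrank ℝ P.range) (hf : ContDiff ℝ 1 f)
    (hfs : HasCompactSupport f) :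
    ∫⁻ x, ‖f x‖ₑ ^ q * ‖P x‖ₑ ^ (-θ) ∂μ ≤ ENNReal.ofReal (q / (finrank ℝ P.range - θ)) *
      ∫⁻ x, ‖f x‖ₑ ^ (q - 1) * ‖fderiv ℝ f x‖ₑ * ‖P x‖ₑ ^ (1 - θ) ∂μ := by
  lift q to ℝ≥0 using by linarith
  have hq0 : (q : ℝ) ≠ 0 := by linarith
  have hgrad (x : E) := enorm_fderiv_norm_rpow_le (hf.differentiable one_ne_zero)
    (x := x) (p := q) (mod_cast hq)
  calc ∫⁻ x, ‖f x‖ₑ ^ (q : ℝ) * ‖P x‖ₑ ^ (-θ) ∂μ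
      = ∫⁻ x, ‖‖f x‖ ^ (q : ℝ)‖ₑ * ‖P x‖ₑ ^ (-θ) ∂μ := by
        simp [Real.enorm_rpow_of_nonneg]
    _ ≤ ENNReal.ofReal (finrank ℝ P.range - θ)⁻¹ *
          ∫⁻ x, ‖fderiv ℝ (fun y => ‖f y‖ ^ (q : ℝ)) x‖ₑ * ‖P x‖ₑ ^ (1 - θ) ∂μ :=
        lintegral_enorm_mul_rpow_neg_le hP hP0 hθ ((contDiff_norm_rpow hq).comp hf)
          (hfs.comp_left (g := fun y => ‖y‖ ^ (q : ℝ)) (by simp [hq0]))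
    _ ≤ ENNReal.ofReal (finrank ℝ P.range - θ)⁻¹ *
          ∫⁻ x, q * (‖f x‖ₑ ^ ((q : ℝ) - 1) * ‖fderiv ℝ f x‖ₑ * ‖P x‖ₑ ^ (1 - θ)) ∂μ := by
        refine mul_le_mul_right (lintegral_mono fun x => ?_) _
        exact (mul_le_mul_left (hgrad x) _).trans_eq (by ring)
    _ = _ := by
        rw [lintegral_const_mul' _ _ ENNReal.coe_ne_top, ← mul_assoc,
          ← ENNReal.ofReal_coe_nnreal, ← ENNReal.ofReal_mul (inv_nonneg.2 (by linarith)),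
          inv_mul_eq_div]

lemma lintegral_rpow_enorm_mul_rpow_neg_le_of_one_le (hP : IsIdempotentElem P) (hP0 : P ≠ 0)
    {p m θ : ℝ} (hp : 1 < p) (hm : 0 < m) (hθ1 : 1 ≤ θ) (hθp : θ ≤ p)
    (hθk : θ < finrank ℝ P.range) (hf : ContDiff ℝ 1 f) (hfs : HasCompactSupport f) :
    ∫⁻ x, ‖f x‖ₑ ^ (θ + m * (1 - θ / p)) * ‖P x‖ₑ ^ (-θ) ∂μ ≤
      ENNReal.ofReal ((θ + m * (1 - θ / p)) / (finrank ℝ P.range - θ)) ^ θ *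
        (∫⁻ x, ‖fderiv ℝ f x‖ₑ ^ p ∂μ) ^ (θ / p) * (∫⁻ x, ‖f x‖ₑ ^ m ∂μ) ^ (1 - θ / p) := by
  have hθ0 : 0 < θ := by linarith
  have hp0 : 0 < p := by linarith
  have hq : 1 < θ + m * (1 - θ / p) := by
    rcases hθp.eq_or_lt with rfl | hlt
    · simpa [hp0.ne'] using hp
    · linarith [mul_pos hm (sub_pos.2 ((div_lt_one hp0).2 hlt))]
  set q := θ + m * (1 - θ / p)
  set D := ∫⁻ x, ‖fderiv ℝ f x‖ₑ ^ p ∂μ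
  set M := ∫⁻ x, ‖f x‖ₑ ^ m ∂μ
  set I := ∫⁻ x, ‖f x‖ₑ ^ q * ‖P x‖ₑ ^ (-θ) ∂μ
  have hself : I ≤ ENNReal.ofReal (q / (finrank ℝ P.range - θ)) * D ^ p⁻¹ * M ^ (θ⁻¹ - p⁻¹) *
      I ^ (1 - θ⁻¹) := by
    refine (lintegral_rpow_enorm_mul_rpow_neg_le hP hP0 hq hθk hf hfs).trans ?_
    simp only [mul_assoc]
    gcongr
    simpa only [mul_assoc] using
      lintegral_rpow_enorm_mul_enorm_fderiv_mul_rpow_le hp0 hm hθ1 hθp hf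
  have hI : I ≠ ∞ := (lintegral_rpow_enorm_mul_rpow_neg_lt_top hP hP0 (by positivity) hθk
    hf.continuous hfs).ne
  have hDexp : p⁻¹ * θ = θ / p := by ring
  have hMexp : (θ⁻¹ - p⁻¹) * θ = 1 - θ / p := by field_simp
  simpa only [ENNReal.mul_rpow_of_nonneg _ _ hθ0.le, ← ENNReal.rpow_mul, hDexp, hMexp] using
    le_rpow_of_le_mul_rpow_one_sub_inv hθ0 hI hself

variable (μ F) in
theorem exists_lintegral_rpow_enorm_mul_rpow_neg_le (hP : IsIdempotentElem P)
    (hk : 1 < finrank ℝ P.range) {p m θ : ℝ} (hp : 1 < p) (hm : 0 < m) (hθ0 : 0 ≤ θ)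
    (hθp : θ ≤ p) (hθk : θ < finrank ℝ P.range) :
    ∃ C : ℝ≥0, ∀ f : E → F, ContDiff ℝ 1 f → HasCompactSupport f →
      ∫⁻ x, ‖f x‖ₑ ^ (θ + m * (1 - θ / p)) * ‖P x‖ₑ ^ (-θ) ∂μ ≤
        C * (∫⁻ x, ‖fderiv ℝ f x‖ₑ ^ p ∂μ) ^ (θ / p) *
          (∫⁻ x, ‖f x‖ₑ ^ m ∂μ) ^ (1 - θ / p) := by
  have hP0 : P ≠ 0 := by rintro rfl; rw [LinearMap.range_zero, finrank_bot] at hk; omega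
  rcases le_total 1 θ with hθ1 | hθ1
  · refine ⟨((θ + m * (1 - θ / p)) / (finrank ℝ P.range - θ)).toNNReal ^ θ, fun f hf hfs => ?_⟩
    rw [ENNReal.coe_rpow_of_nonneg _ hθ0]
    exact lintegral_rpow_enorm_mul_rpow_neg_le_of_one_le hP hP0 hp hm hθ1 hθp hθk hf hfs
  have hp0 : 0 < p := by linarith
  have hp' : 0 ≤ 1 - 1 / p := sub_nonneg.2 ((div_le_one hp0).2 hp.le)
  set q := 1 + m * (1 - 1 / p) with hq
  set c := q / (finrank ℝ P.range - 1)
  refine ⟨c.toNNReal ^ θ, fun f hf hfs => ?_⟩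
  set D := ∫⁻ x, ‖fderiv ℝ f x‖ₑ ^ p ∂μ
  set M := ∫⁻ x, ‖f x‖ₑ ^ m ∂μ
  calc ∫⁻ x, ‖f x‖ₑ ^ (θ + m * (1 - θ / p)) * ‖P x‖ₑ ^ (-θ) ∂μ
      = ∫⁻ x, ‖f x‖ₑ ^ (q * θ + m * (1 - θ)) * (‖P x‖ₑ ^ (-1 : ℝ)) ^ θ ∂μ := by
        have hexp : θ + m * (1 - θ / p) = q * θ + m * (1 - θ) := by rw [hq]; ring
        simp only [hexp, ← ENNReal.rpow_mul, neg_one_mul]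
    _ ≤ (∫⁻ x, ‖f x‖ₑ ^ q * ‖P x‖ₑ ^ (-1 : ℝ) ∂μ) ^ θ * M ^ (1 - θ) :=
        lintegral_rpow_add_mul_rpow_le hf.continuous.enorm.measurable.aemeasurable
          (measurable_enorm_apply_rpow P _).aemeasurable (by positivity) hm.le hθ0
          (sub_nonneg.2 hθ1) (by ring)
    _ ≤ (ENNReal.ofReal c ^ (1 : ℝ) * D ^ (1 / p) * M ^ (1 - 1 / p)) ^ θ * M ^ (1 - θ) := by
        gcongr
        exact lintegral_rpow_enorm_mul_rpow_neg_le_of_one_le hP hP0 hp hm le_rfl hp.le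
          (mod_cast hk) hf hfs
    _ = (c.toNNReal ^ θ : ℝ≥0) * D ^ (θ / p) * M ^ (1 - θ / p) := by
        have hDexp : 1 / p * θ = θ / p := by ring
        have hMexp : (1 - 1 / p) * θ + (1 - θ) = 1 - θ / p := by ring
        rw [ENNReal.coe_rpow_of_nonneg _ hθ0, ENNReal.rpow_one, ENNReal.ofReal,
          ENNReal.mul_rpow_of_nonneg _ _ hθ0, ENNReal.mul_rpow_of_nonneg _ _ hθ0,
          ← ENNReal.rpow_mul, ← ENNReal.rpow_mul, mul_assoc, ← ENNReal.rpow_add_of_nonneg _ _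
            (by positivity) (by linarith), hDexp, hMexp]

variable (μ F) in
lemma exists_lintegral_rpow_enorm_le_lintegral_rpow_enorm_fderiv {p : ℝ≥0} (hp : 1 ≤ p)
    (hpn : p < finrank ℝ E) :
    ∃ C : ℝ≥0, ∀ f : E → F, ContDiff ℝ 1 f → HasCompactSupport f →
      ∫⁻ x, ‖f x‖ₑ ^ (p * finrank ℝ E / (finrank ℝ E - p) : ℝ) ∂μ ≤
        C * (∫⁻ x, ‖fderiv ℝ f x‖ₑ ^ (p : ℝ) ∂μ) ^ (finrank ℝ E / (finrank ℝ E - p) : ℝ) := by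
  have hp0 : (0 : ℝ) < p := zero_lt_one.trans_le hp
  have hpn' : (p : ℝ) < finrank ℝ E := mod_cast hpn
  have hn0 : (0 : ℝ) < finrank ℝ E := hp0.trans hpn'
  have hsub : (0 : ℝ) < finrank ℝ E - p := sub_pos.2 hpn'
  have hconj0 : (0 : ℝ) < p * finrank ℝ E / (finrank ℝ E - p) := by positivity
  have hinv : (p * finrank ℝ E / (finrank ℝ E - p) : ℝ)⁻¹ = (p : ℝ)⁻¹ - (finrank ℝ E : ℝ)⁻¹ := by
    field_simp
  have hratio : (1 / p * (p * finrank ℝ E / (finrank ℝ E - p)) : ℝ) =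
      finrank ℝ E / (finrank ℝ E - p) := by field_simp
  rw [← hratio]
  generalize (p * finrank ℝ E / (finrank ℝ E - p) : ℝ) = r at *
  lift r to ℝ≥0 using hconj0.le
  refine ⟨eLpNormLESNormFDerivOfEqInnerConst μ p ^ (r : ℝ), fun f hf hfs => ?_⟩
  have hGNS := eLpNorm_le_eLpNorm_fderiv_of_eq_inner μ hf hfs hp (mod_cast hn0)
    (hinv.trans (by simp))
  rw [← eLpNorm_nnreal_pow_eq_lintegral (mod_cast hconj0.ne')]
  grw [hGNS]
  rw [ENNReal.mul_rpow_of_nonneg _ _ hconj0.le, eLpNorm_nnreal_eq_lintegral (mod_cast hp0.ne'),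
    ← ENNReal.rpow_mul, ENNReal.coe_rpow_of_nonneg _ hconj0.le]

variable (μ F) in
lemma exists_lintegral_rpow_enorm_le_rpow_mul_rpow {p : ℝ≥0} (hp : 1 ≤ p)
    (hpn : p < finrank ℝ E) {a b : ℝ} (ha : 0 ≤ a) (hb : 0 ≤ b) (hab : a + b = 1) :
    ∃ C : ℝ≥0, ∀ f : E → F, ContDiff ℝ 1 f → HasCompactSupport f →
      ∫⁻ x, ‖f x‖ₑ ^ (p * a + p * finrank ℝ E / (finrank ℝ E - p) * b) ∂μ ≤
        C * (∫⁻ x, ‖f x‖ₑ ^ (p : ℝ) ∂μ) ^ a *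
          (∫⁻ x, ‖fderiv ℝ f x‖ₑ ^ (p : ℝ) ∂μ) ^ (finrank ℝ E / (finrank ℝ E - p) * b) := by
  obtain ⟨C, hC⟩ := exists_lintegral_rpow_enorm_le_lintegral_rpow_enorm_fderiv μ F hp hpn
  have hnp : (0 : ℝ) < finrank ℝ E - p := sub_pos.2 (mod_cast hpn)
  refine ⟨C ^ b, fun f hf hfs => ?_⟩
  set S := ∫⁻ x, ‖f x‖ₑ ^ (p : ℝ) ∂μ
  set D := ∫⁻ x, ‖fderiv ℝ f x‖ₑ ^ (p : ℝ) ∂μ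
  calc ∫⁻ x, ‖f x‖ₑ ^ (p * a + p * finrank ℝ E / (finrank ℝ E - p) * b) ∂μ
      ≤ S ^ a * (∫⁻ x, ‖f x‖ₑ ^ (p * finrank ℝ E / (finrank ℝ E - p) : ℝ) ∂μ) ^ b := by
        simpa using lintegral_rpow_add_mul_rpow_le (ν := μ) (w := 1)
          hf.continuous.enorm.measurable.aemeasurable aemeasurable_one p.coe_nonneg
          (m := p * finrank ℝ E / (finrank ℝ E - p)) (by positivity) ha hb hab
    _ ≤ S ^ a * (C * D ^ (finrank ℝ E / (finrank ℝ E - p) : ℝ)) ^ b := by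
        gcongr
        exact hC f hf hfs
    _ = (C ^ b : ℝ≥0) * S ^ a * D ^ (finrank ℝ E / (finrank ℝ E - p) * b) := by
        rw [ENNReal.mul_rpow_of_nonneg _ _ hb, ENNReal.coe_rpow_of_nonneg _ hb, ENNReal.rpow_mul]
        ring

variable (μ F) in
lemma exists_lintegral_rpow_enorm_mul_rpow_neg_le_rpow_mul_rpow (hP : IsIdempotentElem P)
    (hk : 1 < finrank ℝ P.range) {p : ℝ≥0} {θ : ℝ} (hp : 1 < p) (hpn : p < finrank ℝ E)
    (hθ0 : 0 ≤ θ) (hθp : θ ≤ p) (hθk : θ < finrank ℝ P.range) {a b : ℝ} (ha : 0 ≤ a)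
    (hb : 0 ≤ b) (hab : a + b = 1) :
    ∃ C : ℝ≥0, ∀ f : E → F, ContDiff ℝ 1 f → HasCompactSupport f →
      ∫⁻ x, ‖f x‖ₑ ^ (p * a + p * (finrank ℝ E - θ) / (finrank ℝ E - p) * b) *
          ‖P x‖ₑ ^ (-θ) ∂μ ≤
        C * (∫⁻ x, ‖f x‖ₑ ^ (p : ℝ) ∂μ) ^ (a * (1 - θ / p)) *
          (∫⁻ x, ‖fderiv ℝ f x‖ₑ ^ (p : ℝ) ∂μ) ^
            (θ / p + finrank ℝ E / (finrank ℝ E - p) * b * (1 - θ / p)) := by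
  have hp' : (1 : ℝ) < p := hp
  have hp0 : (0 : ℝ) < p := one_pos.trans hp'
  have hnp : (0 : ℝ) < finrank ℝ E - p := sub_pos.2 (mod_cast hpn)
  have hn0 : (0 : ℝ) < finrank ℝ E := by linarith
  have hγ : 0 ≤ 1 - θ / p := sub_nonneg.2 ((div_le_one hp0).2 hθp)
  set m := p * a + p * finrank ℝ E / (finrank ℝ E - p) * b with hm_eq
  have hm : 0 < m := by
    rcases hb.eq_or_lt with rfl | hb0
    · simp_all
    · positivity
  have hqexp : p * a + p * (finrank ℝ E - θ) / (finrank ℝ E - p) * b = θ + m * (1 - θ / p) := by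
    rw [hm_eq, eq_sub_of_add_eq hab]; field_simp; ring
  obtain ⟨C, hC⟩ := exists_lintegral_rpow_enorm_le_rpow_mul_rpow μ F hp.le hpn ha hb hab
  obtain ⟨C', hC'⟩ := exists_lintegral_rpow_enorm_mul_rpow_neg_le μ F hP hk hp' hm hθ0 hθp hθk
  refine ⟨C' * C ^ (1 - θ / p), fun f hf hfs => (hqexp ▸ hC' f hf hfs).trans ?_⟩
  grw [hC f hf hfs]
  rw [ENNReal.rpow_add_of_nonneg _ _ (by positivity) (by positivity), ENNReal.coe_mul,
    ENNReal.mul_rpow_of_nonneg _ _ hγ, ENNReal.mul_rpow_of_nonneg _ _ hγ,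
    ENNReal.coe_rpow_of_nonneg _ hγ]
  simp only [ENNReal.rpow_mul]
  exact le_of_eq (by ring)

end Power

theorem sobolev_hardy_axial_general {E : Type*} [NormedAddCommGroup E] [NormedSpace ℝ E]
    [FiniteDimensional ℝ E] [MeasurableSpace E] [BorelSpace E] (μ : Measure E)
    [μ.IsAddHaarMeasure] (F : Type*) [NormedAddCommGroup F] [InnerProductSpace ℝ F]
    {P : E →ₗ[ℝ] E} (hP : IsIdempotentElem P) (hk : 1 < finrank ℝ P.range) {p q : ℝ≥0} {θ : ℝ}
    (hp : 1 < p) (hpn : p < finrank ℝ E) (hθ0 : 0 ≤ θ) (hθp : θ ≤ p)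
    (hθk : θ < finrank ℝ P.range) (hpq : p ≤ q)
    (hq : q ≤ p * (finrank ℝ E - θ) / (finrank ℝ E - p)) :
    ∃ C : ℝ≥0, 0 < C ∧ ∀ f : E → F, ContDiff ℝ 1 f → HasCompactSupport f →
      eLpNorm (fun x => (‖P x‖ ^ (θ / q))⁻¹ • f x) q μ ≤
        C * eLpNorm f p μ ^ ((finrank ℝ E - θ) / q - finrank ℝ E / p + 1) *
          eLpNorm (fderiv ℝ f) p μ ^ (finrank ℝ E / p - (finrank ℝ E - θ) / q) := by
  have hp0 : (0 : ℝ) < p := one_pos.trans (NNReal.one_lt_coe.2 hp)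
  have hq0 : (0 : ℝ) < q := hp0.trans_le (NNReal.coe_le_coe.2 hpq)
  have hpn' : (0 : ℝ) < finrank ℝ E - p := sub_pos.2 (mod_cast hpn)
  obtain ⟨a, b, ha, hb, hab, hqab⟩ := exists_add_eq_one_mul_add_mul_eq
    (NNReal.coe_le_coe.2 hpq) hq
  obtain ⟨C, hC⟩ :=
    exists_lintegral_rpow_enorm_mul_rpow_neg_le_rpow_mul_rpow μ F hP hk hp hpn hθ0 hθp hθk
      ha hb hab
  have hSexp := mul_one_sub_div_eq hp0 hq0 hpn' hab hqab
  have hDexp := div_add_mul_one_sub_div_eq hp0 hq0 hpn' hab hqab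
  rw [hqab, hSexp, hDexp] at hC
  refine ⟨(C + 1) ^ (1 / q : ℝ), by positivity, fun f hf hfs => ?_⟩
  rw [← ENNReal.rpow_le_rpow_iff hq0]
  grw [eLpNorm_inv_norm_rpow_smul_rpow_le (mod_cast hq0.ne') hθ0 P f μ, hC f hf hfs]
  rw [eLpNorm_nnreal_eq_lintegral (mod_cast hp0.ne'),
    eLpNorm_nnreal_eq_lintegral (mod_cast hp0.ne'), ENNReal.mul_rpow_of_nonneg _ _ hq0.le,
    ENNReal.mul_rpow_of_nonneg _ _ hq0.le]
  simp only [← ENNReal.rpow_mul]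
  gcongr
  rw [ENNReal.coe_rpow_of_nonneg _ (by positivity), ← ENNReal.rpow_mul]
  simp [hq0.ne']

/-- The orthogonal projection of `E3` onto the `x₁x₂`-plane. -/
def axialProj : E3 →ₗ[ℝ] E3 := Matrix.toLpLin 2 2 (Matrix.diagonal ![1, 1, 0])

lemma isIdempotentElem_axialProj : IsIdempotentElem axialProj := by
  rw [IsIdempotentElem, axialProj, Module.End.mul_eq_comp, ← Matrix.toLpLin_mul_same,
    Matrix.diagonal_mul_diagonal]
  congr 2
  ext i
  fin_cases i <;> simp

lemma norm_axialProj (x : E3) : ‖axialProj x‖ = rad x := by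
  simp [rad, axialProj, EuclideanSpace.norm_eq, Fin.sum_univ_three, Matrix.toLpLin_apply,
    Matrix.mulVec_diagonal]

lemma finrank_range_axialProj : finrank ℝ axialProj.range = 2 := by
  rw [axialProj, Matrix.toLpLin_eq_toLin, ← Matrix.rank_eq_finrank_range_toLin,
    Matrix.rank_diagonal]
  simp [Fintype.card_subtype, Finset.card_filter, Fin.sum_univ_three]

/-- Sobolev–Hardy inequality in `ℝ³` with the axial weight
`r = √(x₁² + x₂²)`: for `0 ≤ θ < 2` and `q* ∈ [2, 2(3−θ)]` there is
`C = C(q*,θ) > 0` such that for all `f ∈ C₀^∞(ℝ³)`,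
`‖ f/r^{θ/q*} ‖_{L^{q*}} ≤ C ‖f‖_{L²}^{(3−θ)/q* − 1/2} ‖∇f‖_{L²}^{3/2 − (3−θ)/q*}`. -/
theorem sobolev_hardy_axial
    (θ qs : ℝ) (hθ0 : 0 ≤ θ) (hθ2 : θ < 2)
    (hqs1 : 2 ≤ qs) (hqs2 : qs ≤ 2 * (3 - θ)) :
    ∃ C : ℝ, 0 < C ∧
      ∀ f : E3 → ℝ,
        ContDiff ℝ (⊤ : ℕ∞) f → HasCompactSupport f →
        eLpNorm (fun x => f x / (rad x) ^ (θ / qs)) (ENNReal.ofReal qs) volume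
          ≤ ENNReal.ofReal C
            * (eLpNorm f 2 volume) ^ ((3 - θ) / qs - 1 / 2)
            * (eLpNorm (fun x => fderiv ℝ f x) 2 volume) ^ (3 / 2 - (3 - θ) / qs) := by
  have hk : (finrank ℝ axialProj.range : ℝ) = 2 := mod_cast finrank_range_axialProj
  have hn : (finrank ℝ E3 : ℝ) = 3 := by simp
  lift qs to ℝ≥0 using by linarith
  obtain ⟨C, hC0, hC⟩ := sobolev_hardy_axial_general volume ℝ isIdempotentElem_axialProj
    (p := 2) (q := qs) (θ := θ) (by simp [finrank_range_axialProj]) one_lt_two (by simp; norm_num)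
    hθ0 hθ2.le (hk ▸ hθ2) (mod_cast hqs1) (by rw [hn]; norm_num; linarith)
  refine ⟨C, hC0, fun f hf hfs => ?_⟩
  have hexp : (3 - θ) / qs - 3 / 2 + 1 = (3 - θ) / qs - 1 / 2 := by ring
  simpa only [hn, hexp, norm_axialProj, smul_eq_mul, inv_mul_eq_div, NNReal.coe_ofNat,
    ENNReal.coe_ofNat, ENNReal.ofReal_coe_nnreal] using hC f (hf.of_le (mod_cast le_top)) hfs
end
end
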